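/- If φ is a W(E8)-invariant weak Jacobi form of weight k ∈ ℤ and index m ∈ ℤ≥0 and φ is not identically zero, then k ≥ −4m. -/

import Mathlib

noncomputable section

open Complex Finset

namespace E8Jacobi

/-- π as a complex number. -/
def πC : ℂ := Real.pi

/-- The E8 lattice as a subset of ℝ^8. -/
def E8Lattice : Set (Fin 8 → ℝ) :=
  {x | ((∀ i, ∃ n : ℤ, x i = n) ∨ (∀ i, ∃ n : ℤ, x i = n + 1/2)) ∧ ∃ m : ℤ, ∑ i, x i = 2 * m}

/-- Complexification of a real vector. -/
def cv (x : Fin 8 → ℝ) : Fin 8 → ℂ := fun i => (x i : ℂ)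

/-- The dot product on ℝ^8. -/
def dotR (x y : Fin 8 → ℝ) : ℝ := ∑ i, x i * y i

/-- The dot product on ℂ^8. -/
def dotC (z w : Fin 8 → ℂ) : ℂ := ∑ i, z i * w i

/-- The Weyl group W(E8): orthogonal matrices preserving the E8 lattice. -/
def WeylE8 : Set (Matrix (Fin 8) (Fin 8) ℝ) :=
  {M | (∀ x y, dotR (M.mulVec x) (M.mulVec y) = dotR x y) ∧
       (∀ x ∈ E8Lattice, M.mulVec x ∈ E8Lattice) ∧
       (∀ x ∈ E8Lattice, ∃ y ∈ E8Lattice, M.mulVec y = x)}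

/-- The complexified (ℂ-linear) action of a real matrix on ℂ^8. -/
def actC (M : Matrix (Fin 8) (Fin 8) ℝ) (z : Fin 8 → ℂ) : Fin 8 → ℂ :=
  fun i => ∑ j, (M i j : ℂ) * z j

/-- A W(E8)-invariant weak Jacobi form of weight `k` and index `m`. -/
structure IsWeakJacobiFormE8 (k : ℤ) (m : ℕ) (φ : ℂ → (Fin 8 → ℂ) → ℂ) : Prop where
  holo : DifferentiableOn ℂ (fun p : ℂ × (Fin 8 → ℂ) => φ p.1 p.2) {p | 0 < p.1.im}
  weyl_inv : ∀ M ∈ WeylE8, ∀ τ : ℂ, 0 < τ.im → ∀ z, φ τ (actC M z) = φ τ z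
  quasi_periodic : ∀ α ∈ E8Lattice, ∀ β ∈ E8Lattice, ∀ τ : ℂ, 0 < τ.im → ∀ z,
    φ τ (fun i => z i + τ * (α i : ℂ) + (β i : ℂ)) =
      Complex.exp (-(m : ℂ) * πC * I * (τ * dotC (cv α) (cv α) + 2 * dotC z (cv α))) * φ τ z
  modular : ∀ a b c d : ℤ, a * d - b * c = 1 → ∀ τ : ℂ, 0 < τ.im → ∀ z,
    φ (((a : ℂ) * τ + (b : ℂ)) / ((c : ℂ) * τ + (d : ℂ))) (fun i => z i / ((c : ℂ) * τ + (d : ℂ))) =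
      ((c : ℂ) * τ + (d : ℂ)) ^ k *
        Complex.exp ((m : ℂ) * πC * I * (c : ℂ) / ((c : ℂ) * τ + (d : ℂ)) * dotC z z) * φ τ z
  fourier : ∃ co : ℕ → E8Lattice → ℂ, ∀ τ : ℂ, 0 < τ.im → ∀ z,
    φ τ z = ∑' (n : ℕ) (w : E8Lattice), co n w *
      Complex.exp (2 * πC * I * dotC (cv w.1) z) * Complex.exp (2 * πC * I * τ) ^ n

/-- Membership in the ring J^{E8}_{*,*} of W(E8)-invariant weak Jacobi forms:
a finite sum of weak Jacobi forms of various weights and indices. -/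
def MemJE8 (φ : ℂ → (Fin 8 → ℂ) → ℂ) : Prop :=
  ∃ (n : ℕ) (k : Fin n → ℤ) (m : Fin n → ℕ) (ψ : Fin n → ℂ → (Fin 8 → ℂ) → ℂ),
    (∀ i, IsWeakJacobiFormE8 (k i) (m i) (ψ i)) ∧
    ∀ τ : ℂ, 0 < τ.im → ∀ z, φ τ z = ∑ i, ψ i τ z

/-- The nome q = e^{2πiτ}. -/
def qExp (τ : ℂ) : ℂ := Complex.exp (2 * πC * I * τ)

/-- The Eisenstein series E4. -/
def E4 (τ : ℂ) : ℂ :=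
  1 + 240 * ∑' n : ℕ+, (n : ℂ) ^ 3 * qExp τ ^ (n : ℕ) / (1 - qExp τ ^ (n : ℕ))

/-- The Eisenstein series E6. -/
def E6 (τ : ℂ) : ℂ :=
  1 - 504 * ∑' n : ℕ+, (n : ℂ) ^ 5 * qExp τ ^ (n : ℕ) / (1 - qExp τ ^ (n : ℕ))

/-- The modular discriminant Δ. -/
def Dl (τ : ℂ) : ℂ := (E4 τ ^ 3 - E6 τ ^ 2) / 1728

/-- The Dedekind eta function. -/
def etaF (τ : ℂ) : ℂ := Complex.exp (2 * πC * I * τ / 24) * ∏' n : ℕ, (1 - qExp τ ^ (n + 1))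

/-- The theta function of the E8 lattice. -/
def Theta (τ : ℂ) (z : Fin 8 → ℂ) : ℂ :=
  ∑' w : E8Lattice, Complex.exp (πC * I * τ * dotC (cv w.1) (cv w.1) + 2 * πC * I * dotC z (cv w.1))

/-- The Jacobi theta function θ1. -/
def th1 (z τ : ℂ) : ℂ :=
  I * ∑' n : ℤ, (-1 : ℂ) ^ n * Complex.exp (2 * πC * I * z * ((n : ℂ) - 1/2)) *
    Complex.exp (πC * I * τ * ((n : ℂ) - 1/2) ^ 2)

/-- The Jacobi theta function θ2. -/
def th2 (z τ : ℂ) : ℂ :=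
  ∑' n : ℤ, Complex.exp (2 * πC * I * z * ((n : ℂ) - 1/2)) *
    Complex.exp (πC * I * τ * ((n : ℂ) - 1/2) ^ 2)

/-- The Jacobi theta function θ3. -/
def th3 (z τ : ℂ) : ℂ :=
  ∑' n : ℤ, Complex.exp (2 * πC * I * z * (n : ℂ)) * Complex.exp (πC * I * τ * (n : ℂ) ^ 2)

/-- The Jacobi theta function θ4. -/
def th4 (z τ : ℂ) : ℂ :=
  ∑' n : ℤ, (-1 : ℂ) ^ n * Complex.exp (2 * πC * I * z * (n : ℂ)) *
    Complex.exp (πC * I * τ * (n : ℂ) ^ 2)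

/-- A1 = Θ(τ,z). -/
def A1 (τ : ℂ) (z : Fin 8 → ℂ) : ℂ := Theta τ z

/-- A_m for m = 2, 3, 5. -/
def AM (m : ℕ) (τ : ℂ) (z : Fin 8 → ℂ) : ℂ :=
  ((m : ℂ) ^ 3 / ((m : ℂ) ^ 3 + 1)) *
    (Theta ((m : ℂ) * τ) (fun i => (m : ℂ) * z i) +
      ((m : ℂ) ^ 4)⁻¹ * ∑ k ∈ Finset.range m, Theta ((τ + (k : ℂ)) / (m : ℂ)) z)

def A2 : ℂ → (Fin 8 → ℂ) → ℂ := AM 2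
def A3 : ℂ → (Fin 8 → ℂ) → ℂ := AM 3
def A5 : ℂ → (Fin 8 → ℂ) → ℂ := AM 5

/-- A4 = Θ(τ,2z). -/
def A4 (τ : ℂ) (z : Fin 8 → ℂ) : ℂ := Theta τ (fun i => 2 * z i)

def ee1 (τ : ℂ) : ℂ := (th3 0 τ ^ 4 + th4 0 τ ^ 4) / 12
def ee2 (τ : ℂ) : ℂ := (th2 0 τ ^ 4 - th4 0 τ ^ 4) / 12
def ee3 (τ : ℂ) : ℂ := (-th2 0 τ ^ 4 - th3 0 τ ^ 4) / 12
def h0 (τ : ℂ) : ℂ := th3 0 (2*τ) * th3 0 (6*τ) + th2 0 (2*τ) * th2 0 (6*τ)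

def B2 (τ : ℂ) (z : Fin 8 → ℂ) : ℂ :=
  (32/5) * (ee1 τ * Theta (2*τ) (fun i => 2 * z i)
    + (1/2^4) * ee3 τ * Theta (τ/2) z + (1/2^4) * ee2 τ * Theta ((τ+1)/2) z)

def B3 (τ : ℂ) (z : Fin 8 → ℂ) : ℂ :=
  (81/80) * (h0 τ ^ 2 * Theta (3*τ) (fun i => 3 * z i)
    - (1/3^5) * ∑ k ∈ Finset.range 3, h0 ((τ + (k:ℂ))/3) ^ 2 * Theta ((τ + (k:ℂ))/3) z)

def B4 (τ : ℂ) (z : Fin 8 → ℂ) : ℂ :=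
  (16/15) * (th4 0 (2*τ) ^ 4 * Theta (4*τ) (fun i => 4 * z i)
    - (1/2^4) * th4 0 (2*τ) ^ 4 * Theta (τ + 1/2) (fun i => 2 * z i)
    - (1/(2^2 * 4^4)) * ∑ k ∈ Finset.range 4, th2 0 ((τ + (k:ℂ))/2) ^ 4 * Theta ((τ + (k:ℂ))/4) z)

def B6 (τ : ℂ) (z : Fin 8 → ℂ) : ℂ :=
  (9/10) * (h0 τ ^ 2 * Theta (6*τ) (fun i => 6 * z i)
    + (1/2^4) * ∑ k ∈ Finset.range 2, h0 (τ + (k:ℂ)) ^ 2 * Theta ((3*τ + 3*(k:ℂ))/2) (fun i => 3 * z i)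
    - (1/(3 * 3^4)) * ∑ k ∈ Finset.range 3, h0 ((τ + (k:ℂ))/3) ^ 2 * Theta ((2*τ + 2*(k:ℂ))/3) (fun i => 2 * z i)
    - (1/(3 * 6^4)) * ∑ k ∈ Finset.range 6, h0 ((τ + (k:ℂ))/3) ^ 2 * Theta ((τ + (k:ℂ))/6) z)

/-- The nine basic W(E8)-invariant holomorphic Jacobi forms A1,…,A5,B2,…,B6. -/
def nineForms : Fin 9 → ℂ → (Fin 8 → ℂ) → ℂ := ![A1, A2, A3, A4, A5, B2, B3, B4, B6]

/- The basic meromorphic Jacobi forms a_i, b_j (Appendix A of the paper). -/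

def a0f (τ : ℂ) (_z : Fin 8 → ℂ) : ℂ := E4 τ / 12

def a2f (τ : ℂ) (z : Fin 8 → ℂ) : ℂ :=
  6 / (E4 τ * Dl τ) * (-(E4 τ) * A2 τ z + A1 τ z ^ 2)

def a3f (τ : ℂ) (z : Fin 8 → ℂ) : ℂ :=
  1 / (9 * E4 τ ^ 2 * Dl τ ^ 2) *
    (-7 * E4 τ ^ 2 * E6 τ * A3 τ z - 20 * E4 τ ^ 3 * B3 τ z
      - 9 * E4 τ * E6 τ * A1 τ z * A2 τ z + 30 * E4 τ ^ 2 * A1 τ z * B2 τ z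
      + 6 * E6 τ * A1 τ z ^ 3)

def a4f (τ : ℂ) (z : Fin 8 → ℂ) : ℂ :=
  1 / (288 * E4 τ ^ 3 * Dl τ ^ 3) *
    (576 * E4 τ ^ 3 * Dl τ * A4 τ z + 32256 * E4 τ ^ 2 * Dl τ * A1 τ z * A3 τ z
      - 9 * E4 τ ^ 5 * A2 τ z ^ 2 - 30 * E4 τ ^ 3 * E6 τ * A2 τ z * B2 τ z
      - 25 * E4 τ ^ 4 * B2 τ z ^ 2
      + (60 * E4 τ ^ 4 - 12 * E4 τ * E6 τ ^ 2) * A1 τ z ^ 2 * A2 τ z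
      + 80 * E4 τ ^ 2 * E6 τ * A1 τ z ^ 2 * B2 τ z
      + (-70 * E4 τ ^ 3 + 6 * E6 τ ^ 2) * A1 τ z ^ 4)

def b0f (τ : ℂ) (_z : Fin 8 → ℂ) : ℂ := E6 τ / 216

def b1f (τ : ℂ) (z : Fin 8 → ℂ) : ℂ := -4 / E4 τ * A1 τ z

def b2f (τ : ℂ) (z : Fin 8 → ℂ) : ℂ :=
  5 / (6 * E4 τ ^ 2 * Dl τ) * (E4 τ ^ 2 * B2 τ z - E6 τ * A1 τ z ^ 2)

def b3f (τ : ℂ) (z : Fin 8 → ℂ) : ℂ :=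
  1 / (108 * E4 τ ^ 3 * Dl τ ^ 2) *
    (-7 * E4 τ ^ 5 * A3 τ z - 20 * E4 τ ^ 3 * E6 τ * B3 τ z
      - 9 * E4 τ ^ 4 * A1 τ z * A2 τ z + 30 * E4 τ ^ 2 * E6 τ * A1 τ z * B2 τ z
      + (16 * E4 τ ^ 3 - 10 * E6 τ ^ 2) * A1 τ z ^ 3)

def b4f (τ : ℂ) (z : Fin 8 → ℂ) : ℂ :=
  1 / (1728 * E4 τ ^ 4 * Dl τ ^ 3) *
    (-8640 * E4 τ ^ 4 * Dl τ * B4 τ z + 138240 * E4 τ ^ 3 * Dl τ * A1 τ z * B3 τ z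
      + 9 * E4 τ ^ 5 * E6 τ * A2 τ z ^ 2 + 30 * E4 τ ^ 6 * A2 τ z * B2 τ z
      + 25 * E4 τ ^ 4 * E6 τ * B2 τ z ^ 2
      - 48 * E4 τ ^ 4 * E6 τ * A1 τ z ^ 2 * A2 τ z
      + (-140 * E4 τ ^ 5 + 60 * E4 τ ^ 2 * E6 τ ^ 2) * A1 τ z ^ 2 * B2 τ z
      + (74 * E4 τ ^ 3 * E6 τ - 10 * E6 τ ^ 3) * A1 τ z ^ 4)

def b5f (τ : ℂ) (z : Fin 8 → ℂ) : ℂ :=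
  1 / (72 * E4 τ ^ 5 * Dl τ ^ 3) *
    (-36288 * E4 τ ^ 4 * Dl τ * A5 τ z - 294 * E4 τ ^ 6 * A2 τ z * A3 τ z
      - 770 * E4 τ ^ 4 * E6 τ * B2 τ z * A3 τ z - 840 * E4 τ ^ 4 * E6 τ * A2 τ z * B3 τ z
      - 2200 * E4 τ ^ 5 * B2 τ z * B3 τ z + 168 * E4 τ ^ 5 * A1 τ z ^ 2 * A3 τ z
      + 480 * E4 τ ^ 3 * E6 τ * A1 τ z ^ 2 * B3 τ z - 621 * E4 τ ^ 5 * A1 τ z * A2 τ z ^ 2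
      + 3525 * E4 τ ^ 4 * A1 τ z * B2 τ z ^ 2 + 1224 * E4 τ ^ 4 * A1 τ z ^ 3 * A2 τ z
      - 240 * E4 τ ^ 2 * E6 τ * A1 τ z ^ 3 * B2 τ z
      + (-456 * E4 τ ^ 3 + 24 * E6 τ ^ 2) * A1 τ z ^ 5)

def b6f (τ : ℂ) (z : Fin 8 → ℂ) : ℂ :=
  1 / (4478976 * E4 τ ^ 6 * Dl τ ^ 5) *
    (-19906560 * E4 τ ^ 6 * Dl τ ^ 2 * B6 τ z
      - 188116992 * E4 τ ^ 4 * E6 τ * Dl τ ^ 2 * A1 τ z * A5 τ z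
      - 5184 * E4 τ ^ 7 * E6 τ * Dl τ * A2 τ z * A4 τ z
      - 8640 * E4 τ ^ 8 * Dl τ * B2 τ z * A4 τ z
      - 103680 * E4 τ ^ 8 * Dl τ * A2 τ z * B4 τ z
      - 172800 * E4 τ ^ 6 * E6 τ * Dl τ * B2 τ z * B4 τ z
      + 12672 * E4 τ ^ 6 * E6 τ * Dl τ * A1 τ z ^ 2 * A4 τ z
      + 17280 * (5 * E4 τ ^ 7 + 9 * E4 τ ^ 4 * E6 τ ^ 2) * Dl τ * A1 τ z ^ 2 * B4 τ z
      + 112896 * E4 τ ^ 7 * E6 τ * Dl τ * A3 τ z ^ 2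
      + 645120 * E4 τ ^ 8 * Dl τ * A3 τ z * B3 τ z
      + 921600 * E4 τ ^ 6 * E6 τ * Dl τ * B3 τ z ^ 2
      - 1717632 * E4 τ ^ 6 * E6 τ * Dl τ * A1 τ z * A2 τ z * A3 τ z
      - 362880 * (4 * E4 τ ^ 7 + 11 * E4 τ ^ 4 * E6 τ ^ 2) * Dl τ * A1 τ z * B2 τ z * A3 τ z
      + 483840 * (4 * E4 τ ^ 7 - 9 * E4 τ ^ 4 * E6 τ ^ 2) * Dl τ * A1 τ z * A2 τ z * B3 τ z
      - 11404800 * E4 τ ^ 5 * E6 τ * Dl τ * A1 τ z * B2 τ z * B3 τ z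
      + 1161216 * E4 τ ^ 5 * E6 τ * Dl τ * A1 τ z ^ 3 * A3 τ z
      - 92160 * (37 * E4 τ ^ 6 - 9 * E4 τ ^ 3 * E6 τ ^ 2) * Dl τ * A1 τ z ^ 3 * B3 τ z
      + (135 * E4 τ ^ 9 * E6 τ + 54 * E4 τ ^ 6 * E6 τ ^ 3) * A2 τ z ^ 3
      + (405 * E4 τ ^ 10 + 540 * E4 τ ^ 7 * E6 τ ^ 2) * A2 τ z ^ 2 * B2 τ z
      + 1575 * E4 τ ^ 8 * E6 τ * A2 τ z * B2 τ z ^ 2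
      + (375 * E4 τ ^ 9 + 500 * E4 τ ^ 6 * E6 τ ^ 2) * B2 τ z ^ 3
      + (-3159 * E4 τ ^ 8 * E6 τ + 1701 * E4 τ ^ 5 * E6 τ ^ 3) * A1 τ z ^ 2 * A2 τ z ^ 2
      + (-3060 * E4 τ ^ 9 - 1800 * E4 τ ^ 6 * E6 τ ^ 2) * A1 τ z ^ 2 * A2 τ z * B2 τ z
      + (6975 * E4 τ ^ 7 * E6 τ - 11025 * E4 τ ^ 4 * E6 τ ^ 3) * A1 τ z ^ 2 * B2 τ z ^ 2
      + (6768 * E4 τ ^ 7 * E6 τ - 3024 * E4 τ ^ 4 * E6 τ ^ 3) * A1 τ z ^ 4 * A2 τ z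
      + (4260 * E4 τ ^ 8 + 1800 * E4 τ ^ 5 * E6 τ ^ 2 + 180 * E4 τ ^ 2 * E6 τ ^ 4) * A1 τ z ^ 4 * B2 τ z
      + (-3692 * E4 τ ^ 6 * E6 τ + 504 * E4 τ ^ 3 * E6 τ ^ 3 - 12 * E6 τ ^ 5) * A1 τ z ^ 6)

/-- The Seiberg–Witten coefficients a_0, …, a_4 (a_1 = 0). -/
def aSW : ℕ → ℂ → (Fin 8 → ℂ) → ℂ
  | 0 => a0f
  | 2 => a2f
  | 3 => a3f
  | 4 => a4f
  | _ => fun _ _ => 0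

/-- The Seiberg–Witten coefficients b_0, …, b_6. -/
def bSW : ℕ → ℂ → (Fin 8 → ℂ) → ℂ
  | 0 => b0f
  | 1 => b1f
  | 2 => b2f
  | 3 => b3f
  | 4 => b4f
  | 5 => b5f
  | 6 => b6f
  | _ => fun _ _ => 0

/-- The translation parameter −b₁/(6b₀). -/
def uShift (τ : ℂ) (z : Fin 8 → ℂ) : ℂ := -(bSW 1 τ z) / (6 * bSW 0 τ z)

/-- The coefficients c_i. -/
def cSW (i : ℕ) (τ : ℂ) (z : Fin 8 → ℂ) : ℂ :=
  ∑ j ∈ Finset.range (i+1), aSW j τ z * (Nat.choose (4-j) (4-i) : ℂ) * uShift τ z ^ (i-j)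

/-- The coefficients d_j. -/
def dSW (j : ℕ) (τ : ℂ) (z : Fin 8 → ℂ) : ℂ :=
  ∑ l ∈ Finset.range (j+1), bSW l τ z * (Nat.choose (6-l) (6-j) : ℂ) * uShift τ z ^ (j-l)

/-- Points of the upper half-plane avoiding the zeros of E4, E6 and Δ
(where all the meromorphic Jacobi forms above are defined). -/
def GoodTau (τ : ℂ) : Prop := 0 < τ.im ∧ E4 τ ≠ 0 ∧ E6 τ ≠ 0 ∧ Dl τ ≠ 0

/-- The eleven generators a_0, a_2, a_3, a_4, b_0, …, b_6 of R. -/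
def abGens : Fin 11 → ℂ → (Fin 8 → ℂ) → ℂ :=
  ![aSW 0, aSW 2, aSW 3, aSW 4, bSW 0, bSW 1, bSW 2, bSW 3, bSW 4, bSW 5, bSW 6]

/-- The eleven generators c_0, …, c_4, d_0, d_2, …, d_6 of R̃. -/
def cdGens : Fin 11 → ℂ → (Fin 8 → ℂ) → ℂ :=
  ![cSW 0, cSW 1, cSW 2, cSW 3, cSW 4, dSW 0, dSW 2, dSW 3, dSW 4, dSW 5, dSW 6]

/-- Membership in the polynomial ring R = ℂ[a_0,a_2,a_3,a_4,b_0,…,b_6]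
(as meromorphic functions on ℍ × ℂ^8). -/
def MemR (φ : ℂ → (Fin 8 → ℂ) → ℂ) : Prop :=
  ∃ P : MvPolynomial (Fin 11) ℂ, ∀ τ : ℂ, GoodTau τ → ∀ z,
    φ τ z = MvPolynomial.eval (fun i => abGens i τ z) P

/-- Membership in the polynomial ring R̃ = ℂ[c_0,…,c_4,d_0,d_2,…,d_6]
(as meromorphic functions on ℍ × ℂ^8). -/
def MemRt (φ : ℂ → (Fin 8 → ℂ) → ℂ) : Prop :=
  ∃ P : MvPolynomial (Fin 11) ℂ, ∀ τ : ℂ, GoodTau τ → ∀ z,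
    φ τ z = MvPolynomial.eval (fun i => cdGens i τ z) P

/- Invariant theory of binary forms. -/

/-- `BinTrans n T α α'` says that `α'` is the coefficient family of the degree-`n`
binary form with coefficients `α` transformed by `T ∈ SL2(ℂ)`. -/
def BinTrans (n : ℕ) (T : Matrix (Fin 2) (Fin 2) ℂ) (α α' : ℕ → ℂ) : Prop :=
  ∀ u v : ℂ,
    ∑ j ∈ Finset.range (n+1), α' j * u ^ (n - j) * v ^ j
      = ∑ i ∈ Finset.range (n+1), α i * (T 0 0 * u + T 0 1 * v) ^ (n - i) *
          (T 1 0 * u + T 1 1 * v) ^ i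

/-- Variables for polynomials in the coefficients of a binary quartic and sextic. -/
abbrev SV := Fin 5 ⊕ Fin 7

/-- Evaluation of a polynomial in the coefficients of the quartic and sextic. -/
def evalSV (Φ : MvPolynomial SV ℂ) (α β : ℕ → ℂ) : ℂ :=
  MvPolynomial.eval (Sum.elim (fun i : Fin 5 => α i.1) (fun j : Fin 7 => β j.1)) Φ

/-- Membership in the ring of joint semiinvariants ℂ[V4 ⊕ V6]^{U2(ℂ)}. -/
def IsSemiinvRingElem (Φ : MvPolynomial SV ℂ) : Prop :=
  ∀ κ : ℂ, ∀ α α' β β' : ℕ → ℂ,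
    BinTrans 4 !![1, κ; 0, 1] α α' → BinTrans 6 !![1, κ; 0, 1] β β' →
      evalSV Φ α' β' = evalSV Φ α β

/-- Membership in the ring of joint invariants ℂ[V4 ⊕ V6]^{SL2(ℂ)}. -/
def IsInvRingElem (Φ : MvPolynomial SV ℂ) : Prop :=
  ∀ T : Matrix (Fin 2) (Fin 2) ℂ, T.det = 1 → ∀ α α' β β' : ℕ → ℂ,
    BinTrans 4 T α α' → BinTrans 6 T β β' → evalSV Φ α' β' = evalSV Φ α β

/-- Variables for joint covariants: coefficients of the two forms together with (u,v). -/
abbrev CVV := (Fin 5 ⊕ Fin 7) ⊕ Fin 2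

/-- Evaluation of a polynomial in the coefficients and (u,v). -/
def evalCov (Ψ : MvPolynomial CVV ℂ) (α β : ℕ → ℂ) (u v : ℂ) : ℂ :=
  MvPolynomial.eval
    (Sum.elim (Sum.elim (fun i : Fin 5 => α i.1) (fun j : Fin 7 => β j.1))
      (fun p : Fin 2 => if p = 0 then u else v)) Ψ

/-- Membership in the ring of joint covariants ℂ[V4 ⊕ V6 ⊕ ℂ²]^{SL2(ℂ)}. -/
def IsCovRingElem (Ψ : MvPolynomial CVV ℂ) : Prop :=
  ∀ T : Matrix (Fin 2) (Fin 2) ℂ, T.det = 1 → ∀ α α' β β' : ℕ → ℂ,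
    BinTrans 4 T α α' → BinTrans 6 T β β' → ∀ u v : ℂ,
      evalCov Ψ α' β' u v = evalCov Ψ α β (T 0 0 * u + T 0 1 * v) (T 1 0 * u + T 1 1 * v)

/-- â_i in ℂ[α, β, α₀⁻¹]. -/
def ahat (α : ℕ → ℂ) (i : ℕ) : ℂ :=
  ∑ j ∈ Finset.range (i+1), α j * (Nat.choose (4-j) (4-i) : ℂ) * (-(α 1)/(4 * α 0)) ^ (i-j)

/-- b̂_i in ℂ[α, β, α₀⁻¹]. -/
def bhat (α β : ℕ → ℂ) (i : ℕ) : ℂ :=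
  ∑ j ∈ Finset.range (i+1), β j * (Nat.choose (6-j) (6-i) : ℂ) * (-(α 1)/(4 * α 0)) ^ (i-j)

/-- ĉ_i in ℂ[α, β, β₀⁻¹]. -/
def chat (α β : ℕ → ℂ) (i : ℕ) : ℂ :=
  ∑ j ∈ Finset.range (i+1), α j * (Nat.choose (4-j) (4-i) : ℂ) * (-(β 1)/(6 * β 0)) ^ (i-j)

/-- d̂_i in ℂ[α, β, β₀⁻¹]. -/
def dhat (β : ℕ → ℂ) (i : ℕ) : ℂ :=
  ∑ j ∈ Finset.range (i+1), β j * (Nat.choose (6-j) (6-i) : ℂ) * (-(β 1)/(6 * β 0)) ^ (i-j)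

/-- The images of the eleven generators of R under ψ. -/
def hatGens (α β : ℕ → ℂ) : Fin 11 → ℂ :=
  ![ahat α 0, ahat α 2, ahat α 3, ahat α 4, bhat α β 0, bhat α β 1, bhat α β 2,
    bhat α β 3, bhat α β 4, bhat α β 5, bhat α β 6]

/-- The images of the eleven generators of R̃ under ψ̃. -/
def cdhatGens (α β : ℕ → ℂ) : Fin 11 → ℂ :=
  ![chat α β 0, chat α β 1, chat α β 2, chat α β 3, chat α β 4, dhat β 0, dhat β 2,
    dhat β 3, dhat β 4, dhat β 5, dhat β 6]

/-- Weights picking out the a-variables among the eleven generators. -/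
def wA : Fin 11 → ℕ := ![1, 1, 1, 1, 0, 0, 0, 0, 0, 0, 0]

/-- Weights picking out the b-variables among the eleven generators. -/
def wB : Fin 11 → ℕ := ![0, 0, 0, 0, 1, 1, 1, 1, 1, 1, 1]

/-- Weights picking out the α-variables. -/
def wSVα : SV → ℕ := Sum.elim (fun _ => 1) (fun _ => 0)

/-- Weights picking out the β-variables. -/
def wSVβ : SV → ℕ := Sum.elim (fun _ => 0) (fun _ => 1)

/-- A joint semiinvariant of the quartic and sextic, of degrees (da, db) and order ω. -/
def IsSemiinvOf (Φ : MvPolynomial SV ℂ) (da db : ℕ) (ω : ℤ) : Prop :=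
  MvPolynomial.IsWeightedHomogeneous wSVα Φ da ∧
  MvPolynomial.IsWeightedHomogeneous wSVβ Φ db ∧
  IsSemiinvRingElem Φ ∧
  ∀ l : ℂ, l ≠ 0 → ∀ α α' β β' : ℕ → ℂ,
    BinTrans 4 !![l, 0; 0, l⁻¹] α α' → BinTrans 6 !![l, 0; 0, l⁻¹] β β' →
      evalSV Φ α' β' = l ^ ω * evalSV Φ α β

/-- Substitution α_i ↦ a_i (with a_1 = 0), β_j ↦ b_j into a polynomial in (α, β). -/
def subAB (Φ : MvPolynomial SV ℂ) : ℂ → (Fin 8 → ℂ) → ℂ :=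
  fun τ z => MvPolynomial.eval
    (Sum.elim (fun i : Fin 5 => aSW i.1 τ z) (fun j : Fin 7 => bSW j.1 τ z)) Φ

/-- The graph of the map ψ_J : a Jacobi form φ = Q(a_i, b_j) is sent to the
polynomial Φ = Q(â_i, b̂_j). -/
def PsiJRel (φ : ℂ → (Fin 8 → ℂ) → ℂ) (Φ : MvPolynomial SV ℂ) : Prop :=
  ∃ Q : MvPolynomial (Fin 11) ℂ,
    (∀ τ : ℂ, GoodTau τ → ∀ z, φ τ z = MvPolynomial.eval (fun i => abGens i τ z) Q) ∧
    (∀ α β : ℕ → ℂ, α 0 ≠ 0 → evalSV Φ α β = MvPolynomial.eval (hatGens α β) Q)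

/-!
The nine points `λ₀ = 0, λ₁, …, λ₈` of the lattice given by `vertex` are the vertices of a regular
simplex. Their centroid `u` satisfies `3u ∈ Λ₈`, `u · u = 8/9` and `u · λᵢ = λᵢ · λᵢ / 2 ∈ ℤ`, and
`SL₂(ℤ)` permutes the expansions of `φ` at the 3-torsion points `(pτ + r)u` through the row vectors
`(p, r)` modulo 3. Let `d` be their common order of vanishing; the leading coefficients `f_{p,r}`
transform with weight `k + d`, and their product over the four lines of `(ℤ/3)²` is, up to roots of
unity, a modular form of level one.

At the cusp `f_{0,1} = O(1)`, whereas `f_{1,0} = O(q^{(d - 4m)/9})`: in the coordinates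
`τ = ∑ yᵢ`, `z = ∑ yᵢ λᵢ` the suitably normalised `φ` is a holomorphic function of the nine
variables `Yᵢ = exp (2πi yᵢ)`, is bounded near the origin and vanishes to order `d` along the
diagonal, so it is `O(ρ ^ d)` where all `|Yᵢ|` are comparable to a small `ρ`. The three lines other
than that of `(0, 1)` are permuted cyclically by `τ ↦ τ + 1`, so the product, which has weight
`4(k + d)`, is `O(q^{(d - 4m)/3})`. If `k < -4m`, dividing it by `Δ ^ ((d - 4m)/3)` leaves a form
of negative weight that is bounded at the cusp, hence zero. So some `f_{p,r}` is zero, then all of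
them are, and this contradicts the choice of `d`.
-/

open Filter Topology Asymptotics Function Metric

/-! ### Complex analysis -/

section RemovableSingularities

theorem sdiff_mem_nhdsNE_of_finite {X : Type*} [TopologicalSpace X] [T1Space X] {U S : Set X}
    {a : X} (hU : U ∈ 𝓝 a) (hS : S.Finite) : U \ S ∈ 𝓝[≠] a :=
  inter_mem (nhdsWithin_le_nhds hU) (nhdsNE_le_cofinite a hS.compl_mem_cofinite)

theorem exists_differentiableOn_eqOn_sdiff {U S : Set ℂ} (hU : IsOpen U) (hS : S.Finite)
    {f : ℂ → ℂ} (hf : DifferentiableOn ℂ f (U \ S))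
    (hb : ∀ a ∈ U, f =O[𝓝[≠] a] fun _ => (1 : ℝ)) :
    ∃ g : ℂ → ℂ, DifferentiableOn ℂ g U ∧ Set.EqOn g f (U \ S) := by
  have hUS : IsOpen (U \ S) := hU.sdiff hS.isClosed
  set g : ℂ → ℂ := fun x => limUnder (𝓝[≠] x) f with hg
  have hgf : Set.EqOn g f (U \ S) := fun x hx =>
    ((hf.differentiableAt (hUS.mem_nhds hx)).continuousAt.tendsto.mono_left
      nhdsWithin_le_nhds).limUnder_eq
  refine ⟨g, fun a ha => DifferentiableAt.differentiableWithinAt ?_, hgf⟩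
  have hmem : U \ S ∈ 𝓝[≠] a := sdiff_mem_nhdsNE_of_finite (hU.mem_nhds ha) hS
  have hbdd : (fun x => f x - f a) =O[𝓝[≠] a] fun _ => (1 : ℝ) :=
    (hb a ha).sub (isBigO_const_const (f a) one_ne_zero _)
  have hextend := Complex.differentiableOn_update_limUnder_insert_of_isLittleO hmem hf
    hbdd.isBoundedUnder_le.isLittleO_sub_self_inv
  refine (hextend.differentiableAt (insert_mem_nhds_iff.2 hmem)).congr_of_eventuallyEq ?_
  filter_upwards [insert_mem_nhds_iff.2 hmem] with x hx
  rcases eq_or_ne x a with rfl | hxa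
  · simp [hg]
  · rw [update_of_ne hxa]
    exact hgf (hx.resolve_left hxa)

theorem norm_le_of_norm_le_sdiff_finite {U S : Set ℂ} (hU : IsOpen U) (hS : S.Finite)
    {g : ℂ → ℂ} (hg : ContinuousOn g U) {M : ℝ} (hM : ∀ x ∈ U \ S, ‖g x‖ ≤ M)
    {x : ℂ} (hx : x ∈ U) : ‖g x‖ ≤ M :=
  le_of_tendsto ((hg.continuousAt (hU.mem_nhds hx)).norm.tendsto.mono_left nhdsWithin_le_nhds)
    (mem_of_superset (sdiff_mem_nhdsNE_of_finite (hU.mem_nhds hx) hS) hM)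

theorem norm_le_of_norm_le_sphere {ρ r M : ℝ} (hr : r < ρ) {f : ℂ → ℂ}
    (hf : ∀ u : ℂ, u ≠ 0 → ‖u‖ < ρ → DifferentiableAt ℂ f u)
    (hb : f =O[𝓝[≠] 0] fun _ => (1 : ℝ)) (hM : ∀ u : ℂ, ‖u‖ = r → ‖f u‖ ≤ M)
    {u : ℂ} (hu0 : u ≠ 0) (hu : ‖u‖ ≤ r) : ‖f u‖ ≤ M := by
  have hr0 : 0 < r := (norm_pos_iff.2 hu0).trans_le hu
  have hfd : DifferentiableOn ℂ f (ball 0 ρ \ {0}) := fun x hx =>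
    (hf x hx.2 (mem_ball_zero_iff.1 hx.1)).differentiableWithinAt
  obtain ⟨g, hg, hgf⟩ := exists_differentiableOn_eqOn_sdiff isOpen_ball (Set.finite_singleton 0)
    hfd fun a ha => by
      rcases eq_or_ne a 0 with rfl | ha0
      · exact hb
      · exact ((hf a ha0 (mem_ball_zero_iff.1 ha)).continuousAt.isBigO_one ℝ).mono
          nhdsWithin_le_nhds
  have hcl : closure (ball (0 : ℂ) r) ⊆ ball 0 ρ := by
    rw [closure_ball _ hr0.ne']
    exact closedBall_subset_ball hr
  have hgf' : ∀ v : ℂ, v ≠ 0 → ‖v‖ ≤ r → g v = f v := fun v hv0 hv =>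
    hgf ⟨mem_ball_zero_iff.2 (hv.trans_lt hr), hv0⟩
  rw [← hgf' u hu0 hu]
  refine Complex.norm_le_of_forall_mem_frontier_norm_le isBounded_ball (hg.mono hcl).diffContOnCl
    (fun v hv => ?_) (by rwa [closure_ball _ hr0.ne', mem_closedBall_zero_iff])
  rw [frontier_ball _ hr0.ne', mem_sphere_zero_iff_norm] at hv
  rw [hgf' v (norm_pos_iff.1 (hv ▸ hr0)) hv.le]
  exact hM v hv

end RemovableSingularities

section OrderOfVanishing

theorem norm_le_of_isBigO_pow {R M : ℝ} {h : ℂ → ℂ} {d : ℕ}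
    (hd : DifferentiableOn ℂ h (ball 0 R)) (hM : ∀ x ∈ ball (0 : ℂ) R, ‖h x‖ ≤ M)
    (hO : h =O[𝓝 0] fun x => x ^ d) {x : ℂ} (hx : ‖x‖ < R) : ‖h x‖ ≤ M * (‖x‖ / R) ^ d := by
  have hxR : x ∈ ball (0 : ℂ) R := mem_ball_zero_iff.2 hx
  cases d with
  | zero => simpa using hM x hxR
  | succ n =>
    have h0 : h 0 = 0 := by simpa using hO.eq_zero_imp.self_of_nhds
    have hlittle : (h · - h 0) =o[𝓝 0] fun w : ℂ => ‖w - 0‖ ^ n := by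
      simp only [h0, sub_zero, ← norm_pow]
      exact (hO.trans_isLittleO (isLittleO_pow_pow n.lt_succ_self)).norm_right
    simpa [h0] using Complex.dist_le_mul_div_pow_of_mapsTo_ball_of_isLittleO hd
      (fun y hy => by simpa [h0] using hM y hy) hlittle hxR

theorem eq_zero_of_forall_isBigO_pow {f : ℂ → ℂ} (hf : Differentiable ℂ f)
    (hO : ∀ d : ℕ, f =O[𝓝 0] fun x => x ^ d) (x : ℂ) : f x = 0 := by
  have hR : ‖x‖ < ‖x‖ + 1 := lt_add_one _
  obtain ⟨M, hM⟩ := (isCompact_closedBall (0 : ℂ) (‖x‖ + 1)).exists_bound_of_continuousOn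
    hf.continuous.continuousOn
  have hlim : Tendsto (fun d : ℕ => M * (‖x‖ / (‖x‖ + 1)) ^ d) atTop (𝓝 0) := by
    simpa using (tendsto_pow_atTop_nhds_zero_of_lt_one (by positivity)
      ((div_lt_one (by positivity)).2 hR)).const_mul M
  exact norm_le_zero_iff.1 <| ge_of_tendsto' hlim fun d => norm_le_of_isBigO_pow
    hf.differentiableOn (fun y hy => hM y (ball_subset_closedBall hy)) (hO d) hR

theorem norm_le_of_isBigO_pow_sdiff_finite {S : Set ℂ} (hS : S.Finite) {R M : ℝ} {f : ℂ → ℂ}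
    {d : ℕ} (hf : DifferentiableOn ℂ f (ball 0 R \ S)) (hM : ∀ x ∈ ball 0 R \ S, ‖f x‖ ≤ M)
    (h0 : (0 : ℂ) ∉ S) (hO : f =O[𝓝 0] fun x => x ^ d) {x : ℂ} (hx : x ∈ ball 0 R \ S) :
    ‖f x‖ ≤ M * (‖x‖ / R) ^ d := by
  obtain ⟨g, hg, hgf⟩ := exists_differentiableOn_eqOn_sdiff isOpen_ball hS hf fun a ha =>
    IsBigO.of_bound M <| mem_of_superset
      (sdiff_mem_nhdsNE_of_finite (isOpen_ball.mem_nhds ha) hS) fun x hx => by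
        simpa using hM x hx
  have h0R : (0 : ℂ) ∈ ball 0 R \ S := ⟨mem_ball_self (pos_of_mem_ball hx.1), h0⟩
  have hgO : g =O[𝓝 0] fun x => x ^ d := hO.congr'
    (mem_of_superset ((isOpen_ball.sdiff hS.isClosed).mem_nhds h0R) fun x hx => (hgf hx).symm)
    EventuallyEq.rfl
  have hgM : ∀ x ∈ ball (0 : ℂ) R, ‖g x‖ ≤ M := fun x =>
    norm_le_of_norm_le_sdiff_finite isOpen_ball hS hg.continuousOn fun y hy => hgf hy ▸ hM y hy
  exact hgf hx ▸ norm_le_of_isBigO_pow hg hgM hgO (mem_ball_zero_iff.1 hx.1)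

theorem exists_div_pow_eq_of_isBigO {R M : ℝ} {h : ℂ → ℂ} {d : ℕ}
    (hd : DifferentiableOn ℂ h (ball 0 R)) (hM : ∀ x ∈ ball (0 : ℂ) R, ‖h x‖ ≤ M)
    (hO : h =O[𝓝 0] fun x => x ^ d) :
    ∃ g : ℂ → ℂ, DifferentiableOn ℂ g (ball 0 R) ∧ (∀ x ∈ ball 0 R, ‖g x‖ ≤ M / R ^ d) ∧
      Set.EqOn g (fun x => h x / x ^ d) (ball 0 R \ {0}) := by
  have hquot : ∀ x ∈ ball (0 : ℂ) R \ {0}, ‖h x / x ^ d‖ ≤ M / R ^ d := by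
    rintro x ⟨hxR, hx0⟩
    rw [norm_div, norm_pow, div_le_iff₀ (pow_pos (norm_pos_iff.2 hx0) d)]
    calc ‖h x‖ ≤ M * (‖x‖ / R) ^ d := norm_le_of_isBigO_pow hd hM hO (mem_ball_zero_iff.1 hxR)
      _ = M / R ^ d * ‖x‖ ^ d := by rw [div_pow]; ring
  have hfin : ({0} : Set ℂ).Finite := Set.finite_singleton 0
  obtain ⟨g, hg, hgh⟩ := exists_differentiableOn_eqOn_sdiff isOpen_ball hfin
    (f := fun x => h x / x ^ d)
    ((hd.mono Set.sdiff_subset).div (by fun_prop) fun x hx => pow_ne_zero d hx.2)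
    fun a ha => IsBigO.of_bound (M / R ^ d) <| mem_of_superset
      (sdiff_mem_nhdsNE_of_finite (isOpen_ball.mem_nhds ha) hfin) fun x hx => by
        simpa using hquot x hx
  exact ⟨g, hg, fun x hx => norm_le_of_norm_le_sdiff_finite isOpen_ball hfin hg.continuousOn
    (fun y hy => hgh hy ▸ hquot y hy) hx, hgh⟩

theorem exists_tendsto_div_pow {R M : ℝ} (hR : 0 < R) {h : ℂ → ℂ} {d : ℕ}
    (hd : DifferentiableOn ℂ h (ball 0 R)) (hM : ∀ x ∈ ball (0 : ℂ) R, ‖h x‖ ≤ M)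
    (hO : h =O[𝓝 0] fun x => x ^ d) :
    ∃ l : ℂ, Tendsto (fun x => h x / x ^ d) (𝓝[≠] 0) (𝓝 l) ∧
      ∀ x : ℂ, x ≠ 0 → ‖x‖ < R → ‖h x / x ^ d - l‖ ≤ 2 * (M / R ^ d) / R * ‖x‖ := by
  obtain ⟨g, hg, hgM, hgh⟩ := exists_div_pow_eq_of_isBigO hd hM hO
  have hball : ball (0 : ℂ) R ∈ 𝓝 0 := ball_mem_nhds 0 hR
  refine ⟨g 0, ?_, fun x hx0 hx => ?_⟩
  · refine Tendsto.congr' ?_ ((hg.differentiableAt hball).continuousAt.tendsto.mono_left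
      nhdsWithin_le_nhds)
    exact mem_of_superset (sdiff_mem_nhdsNE_of_finite hball (Set.finite_singleton 0)) hgh
  · have hxR : x ∈ ball (0 : ℂ) R := mem_ball_zero_iff.2 hx
    have hmaps : Set.MapsTo g (ball 0 R) (closedBall (g 0) (2 * (M / R ^ d))) := fun y hy => by
      rw [mem_closedBall_iff_norm, two_mul]
      exact norm_sub_le_of_le (hgM y hy) (hgM 0 (mem_ball_self hR))
    simpa [dist_eq_norm, hgh ⟨hxR, hx0⟩] using
      Complex.dist_le_div_mul_dist_of_mapsTo_ball hg hmaps hxR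

variable {d : ℕ}

theorem tendsto_limUnder_div_pow {f : ℂ → ℂ} (hf : Differentiable ℂ f)
    (hO : f =O[𝓝 0] fun x => x ^ d) :
    Tendsto (fun x => f x / x ^ d) (𝓝[≠] 0) (𝓝 (limUnder (𝓝[≠] 0) fun x => f x / x ^ d)) := by
  obtain ⟨M, hM⟩ := (isCompact_closedBall (0 : ℂ) 1).exists_bound_of_continuousOn
    hf.continuous.continuousOn
  obtain ⟨l, hl, -⟩ := exists_tendsto_div_pow one_pos hf.differentiableOn
    (fun x hx => hM x (ball_subset_closedBall hx)) hO
  exact tendsto_nhds_limUnder ⟨l, hl⟩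

theorem norm_limUnder_div_pow_le {R M : ℝ} (hR : 0 < R) {f : ℂ → ℂ} (hf : Differentiable ℂ f)
    (hM : ∀ x ∈ ball (0 : ℂ) R, ‖f x‖ ≤ M) (hO : f =O[𝓝 0] fun x => x ^ d) :
    ‖limUnder (𝓝[≠] 0) fun x => f x / x ^ d‖ ≤ M / R ^ d := by
  obtain ⟨g, -, hgM, hgf⟩ := exists_div_pow_eq_of_isBigO hf.differentiableOn hM hO
  refine le_of_tendsto (tendsto_limUnder_div_pow hf hO).norm ?_
  filter_upwards [nhdsWithin_le_nhds (ball_mem_nhds (0 : ℂ) hR), self_mem_nhdsWithin] with x hx hx0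
  exact (congrArg norm (hgf ⟨hx, hx0⟩)).symm.trans_le (hgM x hx)

theorem isBigO_pow_succ_of_limUnder_eq_zero {f : ℂ → ℂ} (hf : Differentiable ℂ f)
    (hO : f =O[𝓝 0] fun x => x ^ d) (h0 : (limUnder (𝓝[≠] 0) fun x => f x / x ^ d) = 0) :
    f =O[𝓝 0] fun x => x ^ (d + 1) := by
  obtain ⟨M, hM⟩ := (isCompact_closedBall (0 : ℂ) 1).exists_bound_of_continuousOn
    hf.continuous.continuousOn
  obtain ⟨l, hl, hlx⟩ := exists_tendsto_div_pow one_pos hf.differentiableOn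
    (fun x hx => hM x (ball_subset_closedBall hx)) hO
  obtain rfl : l = 0 := hl.limUnder_eq.symm.trans h0
  have hf0 : f 0 = 0 := by
    have hpow : Tendsto (fun x : ℂ => x ^ d) (𝓝[≠] 0) (𝓝 (0 ^ d)) :=
      ((continuous_pow d).tendsto 0).mono_left nhdsWithin_le_nhds
    refine tendsto_nhds_unique ((hf.continuous.tendsto 0).mono_left nhdsWithin_le_nhds)
      (((hl.mul hpow).congr' ?_).trans_eq (by rw [zero_mul]))
    filter_upwards [self_mem_nhdsWithin] with x hx
    exact div_mul_cancel₀ _ (pow_ne_zero d hx)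
  refine IsBigO.of_bound (2 * M) ?_
  filter_upwards [ball_mem_nhds (0 : ℂ) one_pos] with x hx
  rcases eq_or_ne x 0 with rfl | hx0
  · simp [hf0]
  have hquot := hlx x hx0 (mem_ball_zero_iff.1 hx)
  rw [sub_zero, norm_div, norm_pow, div_le_iff₀ (pow_pos (norm_pos_iff.2 hx0) d)] at hquot
  exact hquot.trans_eq (by rw [norm_pow]; ring)

theorem differentiableOn_limUnder_div_pow {U : Set ℂ} {h : ℂ → ℂ → ℂ} (hU : IsOpen U)
    (hh : DifferentiableOn ℂ ↿h (U ×ˢ Set.univ))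
    (hO : ∀ τ ∈ U, h τ =O[𝓝 0] fun x => x ^ d) :
    DifferentiableOn ℂ (fun τ => limUnder (𝓝[≠] 0) fun x => h τ x / x ^ d) U := by
  have hdiff : ∀ τ ∈ U, ∀ x, DifferentiableAt ℂ ↿h (τ, x) := fun τ hτ x =>
    hh.differentiableAt ((hU.prod isOpen_univ).mem_nhds ⟨hτ, Set.mem_univ x⟩)
  have hx : ∀ τ ∈ U, Differentiable ℂ (h τ) := fun τ hτ x =>
    (hdiff τ hτ x).comp (g := ↿h) x (f := fun x => (τ, x)) (by fun_prop)
  have hτ : ∀ x, DifferentiableOn ℂ (fun τ => h τ x / x ^ d) U := fun x τ hτ =>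
    (((hdiff τ hτ x).comp (g := ↿h) τ (f := fun τ => (τ, x))
      (by fun_prop)).div_const _).differentiableWithinAt
  refine TendstoLocallyUniformlyOn.differentiableOn (φ := 𝓝[≠] (0 : ℂ))
    ((tendstoLocallyUniformlyOn_iff_forall_isCompact hU).2 fun K hKU hK => ?_)
    (Eventually.of_forall hτ) hU
  obtain ⟨M, hM⟩ := (hK.prod (isCompact_closedBall (0 : ℂ) 1)).exists_bound_of_continuousOn
    (hh.continuousOn.mono (Set.prod_mono hKU (Set.subset_univ _)))
  have hrate : ∀ x : ℂ, x ≠ 0 → ‖x‖ < 1 → ∀ τ ∈ K,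
      dist (limUnder (𝓝[≠] 0) fun x => h τ x / x ^ d) (h τ x / x ^ d) ≤ 2 * M * ‖x‖ := by
    intro x hx0 hx1 τ hτK
    obtain ⟨l, hl, hlx⟩ := exists_tendsto_div_pow one_pos (hx τ (hKU hτK)).differentiableOn
      (fun y hy => hM (τ, y) ⟨hτK, ball_subset_closedBall hy⟩) (hO τ (hKU hτK))
    rw [hl.limUnder_eq, dist_comm, dist_eq_norm]
    simpa using hlx x hx0 hx1
  refine Metric.tendstoUniformlyOn_iff.2 fun ε hε => ?_
  have hsmall : ∀ᶠ x : ℂ in 𝓝[≠] 0, 2 * M * ‖x‖ < ε :=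
    ((continuous_const.mul continuous_norm).tendsto' (0 : ℂ) 0 (by simp)).mono_left
      nhdsWithin_le_nhds |>.eventually_lt_const hε
  filter_upwards [hsmall, nhdsWithin_le_nhds (ball_mem_nhds (0 : ℂ) one_pos), self_mem_nhdsWithin]
    with x hxε hx1 hx0 τ hτK
  exact (hrate x hx0 (mem_ball_zero_iff.1 hx1) τ hτK).trans_lt hxε

end OrderOfVanishing

section Polydisc

variable {ι : Type*} [Fintype ι] {F : (ι → ℂ) → ℂ} {M : ℝ}

theorem norm_le_of_norm_le_update_sphere [DecidableEq ι]
    (hF : ∀ Y : ι → ℂ, (∀ i, Y i ≠ 0) → ‖∏ i, Y i‖ < 1 → DifferentiableAt ℂ F Y)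
    {Y : ι → ℂ} (hY : ∀ i, Y i ≠ 0) (a : ι)
    (hb : (fun u => F (update Y a u)) =O[𝓝[≠] 0] fun _ => (1 : ℝ)) {r : ℝ}
    (hr : r * ∏ i ∈ univ \ {a}, ‖Y i‖ < 1) (hYr : ‖Y a‖ ≤ r)
    (hM : ∀ u : ℂ, ‖u‖ = r → ‖F (update Y a u)‖ ≤ M) : ‖F Y‖ ≤ M := by
  have hp : 0 < ∏ i ∈ univ \ {a}, ‖Y i‖ := prod_pos fun i _ => norm_pos_iff.2 (hY i)
  have hdiff : ∀ u : ℂ, u ≠ 0 → ‖u‖ < 1 / ∏ i ∈ univ \ {a}, ‖Y i‖ →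
      DifferentiableAt ℂ (fun u => F (update Y a u)) u := by
    intro u hu0 hu
    refine (hF _ (fun i => ?_) ?_).comp (g := F) u
      ((hasDerivAt_update Y a u).differentiableAt)
    · exact (forall_update_iff Y fun _ x => x ≠ 0).2 ⟨hu0, fun j _ => hY j⟩ i
    · rwa [prod_update_of_mem (mem_univ a), norm_mul, norm_prod, ← lt_div_iff₀ hp]
  simpa using norm_le_of_norm_le_sphere ((lt_div_iff₀ hp).2 hr) hdiff hb hM (hY a) hYr

theorem norm_le_of_norm_le_torus [DecidableEq ι]
    (hF : ∀ Y : ι → ℂ, (∀ i, Y i ≠ 0) → ‖∏ i, Y i‖ < 1 → DifferentiableAt ℂ F Y)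
    (hb : ∀ Y : ι → ℂ, (∀ i, Y i ≠ 0) → ∀ i,
      (fun u => F (update Y i u)) =O[𝓝[≠] 0] fun _ => (1 : ℝ))
    {r : ι → ℝ} (hr : ∏ i, r i < 1) (hM : ∀ Y : ι → ℂ, (∀ i, ‖Y i‖ = r i) → ‖F Y‖ ≤ M)
    {Y : ι → ℂ} (hY : ∀ i, Y i ≠ 0) (hYr : ∀ i, ‖Y i‖ ≤ r i) : ‖F Y‖ ≤ M := by
  suffices h : ∀ (S : Finset ι) (Y : ι → ℂ), (∀ i, Y i ≠ 0) → (∀ i, ‖Y i‖ ≤ r i) →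
      (∀ i ∉ S, ‖Y i‖ = r i) → ‖F Y‖ ≤ M from
    h univ Y hY hYr fun i hi => absurd (mem_univ i) hi
  intro S
  induction S using Finset.induction_on with
  | empty => exact fun Y _ _ hYS => hM Y fun i => hYS i (notMem_empty i)
  | insert a S ha ih =>
    intro Y hY hYr hYS
    have hra : 0 < r a := (norm_pos_iff.2 (hY a)).trans_le (hYr a)
    refine norm_le_of_norm_le_update_sphere hF hY a (hb Y hY a) ?_ (hYr a) fun u hu => ?_
    · refine lt_of_le_of_lt ?_ hr
      rw [prod_eq_mul_prod_sdiff_singleton_of_mem (mem_univ a) r]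
      gcongr with i
      exact hYr i
    · refine ih _ ?_ ?_ fun i hi => ?_
      · exact (forall_update_iff Y fun _ x => x ≠ 0).2
          ⟨norm_pos_iff.1 (hu ▸ hra), fun j _ => hY j⟩
      · exact (forall_update_iff Y fun i x => ‖x‖ ≤ r i).2 ⟨hu.le, fun j _ => hYr j⟩
      · rcases eq_or_ne i a with rfl | hia
        · simpa using hu
        · rw [update_of_ne hia]
          exact hYS i (by simp [hia, hi])

theorem exists_norm_le_of_punctured_polydisc [DecidableEq ι]
    (hF : ∀ Y : ι → ℂ, (∀ i, Y i ≠ 0) → ‖∏ i, Y i‖ < 1 → DifferentiableAt ℂ F Y)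
    (hb : ∀ Y : ι → ℂ, (∀ i, Y i ≠ 0) → ∀ i,
      (fun u => F (update Y i u)) =O[𝓝[≠] 0] fun _ => (1 : ℝ))
    {r : ι → ℝ} (hr0 : ∀ i, 0 < r i) (hr : ∏ i, r i < 1) :
    ∃ M, ∀ Y : ι → ℂ, (∀ i, Y i ≠ 0) → (∀ i, ‖Y i‖ ≤ r i) → ‖F Y‖ ≤ M := by
  have hcont : ContinuousOn F (Set.univ.pi fun i => sphere (0 : ℂ) (r i)) := by
    intro Y hY
    have hYr : ∀ i, ‖Y i‖ = r i := fun i => by simpa using hY i (Set.mem_univ i)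
    refine (hF Y (fun i => norm_pos_iff.1 (hYr i ▸ hr0 i)) ?_).continuousAt.continuousWithinAt
    rwa [norm_prod, prod_congr rfl fun i _ => hYr i]
  obtain ⟨M, hM⟩ :=
    (isCompact_univ_pi fun i => isCompact_sphere (0 : ℂ) (r i)).exists_bound_of_continuousOn hcont
  exact ⟨M, fun Y => norm_le_of_norm_le_torus hF hb hr fun Y hY => hM Y fun i _ => by
    simpa using hY i⟩

variable {r : ℝ} {d : ℕ}

theorem norm_add_smul_le_of_isBigO
    (hF : ∀ Y : ι → ℂ, (∀ i, Y i ≠ 0) → ‖Y‖ < r → DifferentiableAt ℂ F Y)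
    (hM : ∀ Y : ι → ℂ, (∀ i, Y i ≠ 0) → ‖Y‖ < r → ‖F Y‖ ≤ M)
    {C X : ι → ℂ} (hC : ∀ i, C i ≠ 0)
    (hO : (fun t : ℂ => F (C + t • X)) =O[𝓝 0] fun t => t ^ d)
    {ρ : ℝ} (hCX : ‖C‖ + ρ * ‖X‖ < r) {s : ℂ} (hs : ‖s‖ < ρ)
    (hsX : ∀ i, (C + s • X) i ≠ 0) : ‖F (C + s • X)‖ ≤ M * (‖s‖ / ρ) ^ d := by
  set S : Set ℂ := ⋃ i, {t | C i + t * X i = 0} with hS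
  have hSfin : S.Finite := Set.finite_iUnion fun i => by
    refine (Set.finite_singleton (-C i / X i)).subset fun t (ht : C i + t * X i = 0) => ?_
    have hXi : X i ≠ 0 := fun h => hC i (by simpa [h] using ht)
    rw [Set.mem_singleton_iff, eq_div_iff hXi]
    linear_combination ht
  have hSmem : ∀ t : ℂ, t ∉ S ↔ ∀ i, (C + t • X) i ≠ 0 := fun t => by simp [hS]
  have hnorm : ∀ t ∈ ball (0 : ℂ) ρ, ‖C + t • X‖ < r := fun t ht => by
    refine lt_of_le_of_lt (norm_add_le_of_le le_rfl ?_) hCX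
    rw [norm_smul]
    gcongr
    exact (mem_ball_zero_iff.1 ht).le
  refine norm_le_of_isBigO_pow_sdiff_finite hSfin
    (fun t ht => DifferentiableAt.differentiableWithinAt ?_)
    (fun t ht => hM _ ((hSmem t).1 ht.2) (hnorm t ht.1)) ((hSmem 0).2 (by simpa using hC)) hO
    ⟨mem_ball_zero_iff.2 hs, (hSmem s).2 hsX⟩
  exact (hF _ ((hSmem t).1 ht.2) (hnorm t ht.1)).comp (g := F) t (by fun_prop)

/- The origin is excluded from the domain of `F`, so the order of vanishing is transported to it
from the nearby diagonal points `(μ, …, μ)`. -/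
theorem norm_smul_le_of_isBigO_diagonal
    (hF : ∀ Y : ι → ℂ, (∀ i, Y i ≠ 0) → ‖Y‖ < r → DifferentiableAt ℂ F Y)
    (hM : ∀ Y : ι → ℂ, (∀ i, Y i ≠ 0) → ‖Y‖ < r → ‖F Y‖ ≤ M)
    (hO : ∀ μ : ℂ, μ ≠ 0 → ‖μ‖ < r → ∀ X : ι → ℂ,
      (fun t : ℂ => F ((fun _ => μ) + t • X)) =O[𝓝 0] fun t => t ^ d)
    {X : ι → ℂ} (hX : ∀ i, X i ≠ 0) {ρ : ℝ} (hρX : ρ * ‖X‖ < r)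
    {s : ℂ} (hs0 : s ≠ 0) (hs : ‖s‖ < ρ) : ‖F (s • X)‖ ≤ M * (‖s‖ / ρ) ^ d := by
  have hsX : ∀ i, (s • X) i ≠ 0 := fun i => mul_ne_zero hs0 (hX i)
  have hnorm : ‖s • X‖ < r := by
    rw [norm_smul]
    exact (mul_le_mul_of_nonneg_right hs.le (norm_nonneg X)).trans_lt hρX
  have hdiag : Continuous fun μ : ℂ => (fun _ => μ : ι → ℂ) := by fun_prop
  have hcont : ContinuousAt (fun μ : ℂ => ‖F ((fun _ => μ) + s • X)‖) 0 := by
    refine ContinuousAt.norm (ContinuousAt.comp' (g := F) ?_ (by fun_prop))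
    simpa [← Pi.zero_def] using (hF _ hsX hnorm).continuousAt
  have hlim := hcont.tendsto.mono_left (nhdsWithin_le_nhds (s := {0}ᶜ))
  rw [← Pi.zero_def, zero_add] at hlim
  refine le_of_tendsto hlim ?_
  have hsmall : ∀ᶠ μ : ℂ in 𝓝 0, ‖(fun _ => μ : ι → ℂ)‖ + ρ * ‖X‖ < r :=
    (hdiag.norm.add continuous_const).continuousAt.eventually_lt_const
      (by simpa [← Pi.zero_def] using hρX)
  have hsmall' : ∀ᶠ μ : ℂ in 𝓝 0, ‖μ‖ < r := continuous_norm.continuousAt.eventually_lt_const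
    (by simpa using (norm_nonneg _).trans_lt hnorm)
  have hne : ∀ᶠ μ : ℂ in 𝓝 0, ∀ i, ((fun _ => μ) + s • X : ι → ℂ) i ≠ 0 :=
    eventually_all.2 fun i => ContinuousAt.eventually_ne (by fun_prop) (by simpa using hsX i)
  filter_upwards [nhdsWithin_le_nhds hsmall, nhdsWithin_le_nhds hsmall', nhdsWithin_le_nhds hne,
    self_mem_nhdsWithin] with μ hμ hμ' hμs hμ0
  exact norm_add_smul_le_of_isBigO hF hM (fun _ => hμ0) (hO μ hμ0 hμ' X) hμ hs hμs

end Polydisc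

/-- The filter of neighbourhoods of the cusp, `Im τ → ∞`. -/
local notation "I∞" => comap Complex.im atTop

section Nome

open Function.Periodic

theorem qExp_eq_qParam : qExp = qParam 1 := by
  funext τ
  simp [qExp, qParam, πC]

theorem norm_qExp (τ : ℂ) : ‖qExp τ‖ = Real.exp (-2 * Real.pi * τ.im) := by
  rw [qExp_eq_qParam, norm_qParam, div_one]

theorem norm_qExp_lt_one_iff {τ : ℂ} : ‖qExp τ‖ < 1 ↔ 0 < τ.im := by
  simpa [qExp_eq_qParam] using norm_qParam_lt_iff one_pos 0 τ

theorem norm_qExp_le_norm_qExp_iff {τ τ' : ℂ} : ‖qExp τ‖ ≤ ‖qExp τ'‖ ↔ τ'.im ≤ τ.im := by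
  simp [norm_qExp, Real.pi_pos]

theorem tendsto_qExp_atImInfty : Tendsto qExp I∞ (𝓝[≠] 0) :=
  qExp_eq_qParam ▸ qParam_tendsto one_pos

theorem qExp_add (x y : ℂ) : qExp (x + y) = qExp x * qExp y := by
  simp only [qExp, mul_add, Complex.exp_add]

theorem qExp_sum {ι : Type*} (s : Finset ι) (y : ι → ℂ) :
    qExp (∑ i ∈ s, y i) = ∏ i ∈ s, qExp (y i) := by
  simp only [qExp, mul_sum, Complex.exp_sum]

theorem qExp_intCast (n : ℤ) : qExp n = 1 :=
  Complex.exp_eq_one_iff.2 ⟨n, by simp only [πC]; ring⟩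

theorem qExp_intCast_mul (n : ℤ) (τ : ℂ) : qExp (n * τ) = qExp τ ^ n := by
  rw [qExp, qExp, mul_left_comm, Complex.exp_int_mul]

theorem qExp_natCast_mul (n : ℕ) (τ : ℂ) : qExp (n * τ) = qExp τ ^ n :=
  mod_cast qExp_intCast_mul n τ

theorem qExp_ne_zero (τ : ℂ) : qExp τ ≠ 0 := Complex.exp_ne_zero _

theorem differentiable_qExp : Differentiable ℂ qExp := qExp_eq_qParam ▸ differentiable_qParam

theorem qExp_invQParam {q : ℂ} (hq : q ≠ 0) : qExp (invQParam 1 q) = q := by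
  rw [qExp_eq_qParam, qParam_right_inv one_ne_zero hq]

theorem exists_invQParam_qExp (τ : ℂ) : ∃ n : ℤ, invQParam 1 (qExp τ) = τ + n := by
  simpa [qExp_eq_qParam] using qParam_left_inv_mod_period one_ne_zero τ

theorem invQParam_one_right : invQParam 1 1 = 0 := by simp [invQParam]

theorem differentiableAt_invQParam {q : ℂ} (hq : q ∈ slitPlane) :
    DifferentiableAt ℂ (invQParam 1) q :=
  (differentiableAt_log hq).const_mul _

end Nome

section NomeLift

open Function.Periodic

/-- The function of the nomes `Y i = exp (2πi y i)` induced by a function of `y` which is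
`ℤ`-periodic in every variable; on other functions the value depends on the branch of the
logarithm. -/
def nomeLift {ι : Type*} (G : (ι → ℂ) → ℂ) (Y : ι → ℂ) : ℂ := G fun i => invQParam 1 (Y i)

theorem nomeLift_update {ι : Type*} [DecidableEq ι] (G : (ι → ℂ) → ℂ) (Y : ι → ℂ) (i : ι) (u : ℂ) :
    nomeLift G (update Y i u) =
      G (update (fun j => invQParam 1 (Y j)) i (invQParam 1 u)) := by
  simp only [nomeLift]
  congr 1
  exact comp_update (invQParam 1) Y i u

variable {ι : Type*} [Fintype ι] {G : (ι → ℂ) → ℂ}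

theorem nomeLift_eq
    (hper : ∀ y : ι → ℂ, 0 < (∑ i, y i).im → ∀ n : ι → ℤ, G (fun i => y i + n i) = G y)
    {y Y : ι → ℂ} (hy : ∀ i, qExp (y i) = Y i) (hY : ‖∏ i, Y i‖ < 1) : nomeLift G Y = G y := by
  obtain rfl : (fun i => qExp (y i)) = Y := funext hy
  rw [← qExp_sum, norm_qExp_lt_one_iff] at hY
  choose n hn using fun i => exists_invQParam_qExp (y i)
  simp only [nomeLift, hn]
  exact hper y hY n

theorem nomeLift_eq_add
    (hper : ∀ y : ι → ℂ, 0 < (∑ i, y i).im → ∀ n : ι → ℤ, G (fun i => y i + n i) = G y)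
    (y : ι → ℂ) {Y : ι → ℂ} (hY0 : ∀ i, Y i ≠ 0) (hY : ‖∏ i, Y i‖ < 1) :
    nomeLift G Y = G fun i => y i + invQParam 1 (Y i / qExp (y i)) :=
  nomeLift_eq hper (fun i => by
    rw [qExp_add, qExp_invQParam (div_ne_zero (hY0 i) (qExp_ne_zero _)),
      mul_div_cancel₀ _ (qExp_ne_zero _)]) hY

theorem differentiableAt_nomeLift
    (hG : ∀ y : ι → ℂ, 0 < (∑ i, y i).im → DifferentiableAt ℂ G y)
    (hper : ∀ y : ι → ℂ, 0 < (∑ i, y i).im → ∀ n : ι → ℤ, G (fun i => y i + n i) = G y)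
    {Y : ι → ℂ} (hY0 : ∀ i, Y i ≠ 0) (hY : ‖∏ i, Y i‖ < 1) :
    DifferentiableAt ℂ (nomeLift G) Y := by
  set y : ι → ℂ := fun i => invQParam 1 (Y i)
  have hqy : ∀ i, qExp (y i) = Y i := fun i => qExp_invQParam (hY0 i)
  have hne : ∀ᶠ Y' in 𝓝 Y, ∀ i, Y' i ≠ 0 :=
    eventually_all.2 fun i => (continuous_apply i).continuousAt.eventually_ne (hY0 i)
  have hlt : ∀ᶠ Y' in 𝓝 Y, ‖∏ i, Y' i‖ < 1 :=
    Tendsto.eventually_lt_const hY (Continuous.tendsto (by fun_prop) Y)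
  have hlocal : nomeLift G =ᶠ[𝓝 Y] fun Y' => G fun i => y i + invQParam 1 (Y' i / Y i) := by
    filter_upwards [hne, hlt] with Y' hY'0 hY'
    simpa only [hqy] using nomeLift_eq_add hper y hY'0 hY'
  refine DifferentiableAt.congr_of_eventuallyEq ?_ hlocal
  refine DifferentiableAt.comp (g := G) Y ?_ (differentiableAt_pi.2 fun i => ?_)
  · simp only [div_self (hY0 _), invQParam_one_right, add_zero]
    refine hG y (norm_qExp_lt_one_iff.1 ?_)
    simpa only [qExp_sum, hqy] using hY
  · refine (DifferentiableAt.comp (g := invQParam 1) Y ?_ (by fun_prop)).const_add (y i)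
    simpa [div_self (hY0 i)] using differentiableAt_invQParam one_mem_slitPlane

theorem exists_norm_nomeLift_le [DecidableEq ι]
    (hG : ∀ y : ι → ℂ, 0 < (∑ i, y i).im → DifferentiableAt ℂ G y)
    (hper : ∀ y : ι → ℂ, 0 < (∑ i, y i).im → ∀ n : ι → ℤ, G (fun i => y i + n i) = G y)
    (hcusp : ∀ (y : ι → ℂ) (i : ι), (fun w => G (update y i w)) =O[I∞] fun _ => (1 : ℝ))
    {r : ι → ℝ} (hr0 : ∀ i, 0 < r i) (hr : ∏ i, r i < 1) :
    ∃ M, ∀ Y : ι → ℂ, (∀ i, Y i ≠ 0) → (∀ i, ‖Y i‖ ≤ r i) → ‖nomeLift G Y‖ ≤ M :=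
  exists_norm_le_of_punctured_polydisc (fun _ => differentiableAt_nomeLift hG hper)
    (fun Y _ i => by
      simpa only [nomeLift_update, comp_def] using
        (hcusp _ i).comp_tendsto (invQParam_tendsto one_pos))
    hr0 hr

theorem exists_norm_le_of_norm_qExp_le [DecidableEq ι]
    (hG : ∀ y : ι → ℂ, 0 < (∑ i, y i).im → DifferentiableAt ℂ G y)
    (hper : ∀ y : ι → ℂ, 0 < (∑ i, y i).im → ∀ n : ι → ℤ, G (fun i => y i + n i) = G y)
    (hcusp : ∀ (y : ι → ℂ) (i : ι), (fun w => G (update y i w)) =O[I∞] fun _ => (1 : ℝ))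
    {r : ι → ℝ} (hr0 : ∀ i, 0 < r i) (hr : ∏ i, r i < 1) :
    ∃ M, ∀ y : ι → ℂ, (∀ i, ‖qExp (y i)‖ ≤ r i) → ‖G y‖ ≤ M := by
  obtain ⟨M, hM⟩ := exists_norm_nomeLift_le hG hper hcusp hr0 hr
  refine ⟨M, fun y hy => ?_⟩
  have hprod : ‖∏ i, qExp (y i)‖ < 1 := by
    rw [norm_prod]
    exact (prod_le_prod (fun _ _ => norm_nonneg _) fun i _ => hy i).trans_lt hr
  rw [← nomeLift_eq hper (fun _ => rfl) hprod]
  exact hM _ (fun _ => qExp_ne_zero _) hy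

theorem norm_prod_lt_one_of_norm_lt_one [Nonempty ι] {Y : ι → ℂ} (hY : ‖Y‖ < 1) :
    ‖∏ i, Y i‖ < 1 := by
  rw [norm_prod]
  calc ∏ i, ‖Y i‖ ≤ ∏ _i : ι, ‖Y‖ :=
        prod_le_prod (fun _ _ => norm_nonneg _) fun i _ => norm_le_pi_norm Y i
    _ = ‖Y‖ ^ Fintype.card ι := by simp
    _ < 1 := pow_lt_one₀ (norm_nonneg _) hY Fintype.card_ne_zero

theorem nomeLift_diagonal_isBigO [Nonempty ι] {d : ℕ}
    (hper : ∀ y : ι → ℂ, 0 < (∑ i, y i).im → ∀ n : ι → ℤ, G (fun i => y i + n i) = G y)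
    (hdiag : ∀ c : ℂ, 0 < c.im → (fun v : ι → ℂ => G fun i => c + v i) =O[𝓝 0] fun v => ‖v‖ ^ d)
    {μ : ℂ} (hμ0 : μ ≠ 0) (hμ : ‖μ‖ < 1) (X : ι → ℂ) :
    (fun t : ℂ => nomeLift G ((fun _ => μ) + t • X)) =O[𝓝 0] fun t => t ^ d := by
  set Y : ℂ → ι → ℂ := fun t => (fun _ => μ) + t • X with hYdef
  set c := invQParam 1 μ
  have hqc : qExp c = μ := qExp_invQParam hμ0
  set v : ℂ → ι → ℂ := fun t i => invQParam 1 (Y t i / μ) with hv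
  have hY0 : Y 0 = fun _ => μ := by simp [hYdef]
  have hYc : Continuous Y := by fun_prop
  have hvd : DifferentiableAt ℂ v 0 := differentiableAt_pi.2 fun i => by
    refine DifferentiableAt.comp (g := invQParam 1) 0 ?_ (by fun_prop)
    simpa [hY0, div_self hμ0] using differentiableAt_invQParam one_mem_slitPlane
  have hv0 : v 0 = 0 := by
    funext i
    simp [hv, hY0, div_self hμ0, invQParam_one_right]
  have hvO : v =O[𝓝 0] fun t => t := by simpa [hv0] using hvd.isBigO_sub
  have hvt : Tendsto v (𝓝 0) (𝓝 0) := by simpa only [hv0] using hvd.continuousAt.tendsto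
  have hY1 : ∀ᶠ t in 𝓝 0, ‖Y t‖ < 1 :=
    Tendsto.eventually_lt_const (by simpa [hY0] using hμ) (hYc.norm.tendsto 0)
  have hYne : ∀ᶠ t in 𝓝 0, ∀ i, Y t i ≠ 0 := eventually_all.2 fun i =>
    ((continuous_apply i).comp hYc).continuousAt.eventually_ne (by simpa [hY0] using hμ0)
  refine IsBigO.congr' (((hdiag c (norm_qExp_lt_one_iff.1 (by rwa [hqc]))).comp_tendsto hvt).trans
    (hvO.norm_left.pow d)) ?_ EventuallyEq.rfl
  filter_upwards [hY1, hYne] with t ht ht0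
  have heq := nomeLift_eq_add hper (fun _ => c) ht0 (norm_prod_lt_one_of_norm_lt_one ht)
  simp only [hqc] at heq
  exact heq.symm

theorem exists_eventually_norm_add_le_of_isBigO_diagonal [DecidableEq ι] [Nonempty ι] {d : ℕ}
    (hG : ∀ y : ι → ℂ, 0 < (∑ i, y i).im → DifferentiableAt ℂ G y)
    (hper : ∀ y : ι → ℂ, 0 < (∑ i, y i).im → ∀ n : ι → ℤ, G (fun i => y i + n i) = G y)
    (hcusp : ∀ (y : ι → ℂ) (i : ι), (fun w => G (update y i w)) =O[I∞] fun _ => (1 : ℝ))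
    (hdiag : ∀ c : ℂ, 0 < c.im → (fun v : ι → ℂ => G fun i => c + v i) =O[𝓝 0] fun v => ‖v‖ ^ d)
    {B : ℝ} (hB : 0 < B) :
    ∃ M, ∀ᶠ t in I∞, ∀ y : ι → ℂ, (∀ i, ‖qExp (y i)‖ ≤ B) →
      ‖G fun i => t + y i‖ ≤ M * ‖qExp t‖ ^ d := by
  obtain ⟨M, hM⟩ := exists_norm_nomeLift_le hG hper hcusp (r := fun _ => 1 / 2)
    (fun _ => by positivity)
    (by simpa using inv_lt_one_of_one_lt₀ (one_lt_pow₀ one_lt_two (Fintype.card_ne_zero (α := ι))))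
  have hM' : ∀ Y : ι → ℂ, (∀ i, Y i ≠ 0) → ‖Y‖ < 1 / 2 → ‖nomeLift G Y‖ ≤ M := fun Y hY0 hY =>
    hM Y hY0 fun i => (norm_le_pi_norm Y i).trans hY.le
  refine ⟨M / (1 / (4 * B)) ^ d, ?_⟩
  have hsmall : ∀ᶠ t in I∞, ‖qExp t‖ < 1 / (4 * B) :=
    (tendsto_qExp_atImInfty.mono_right nhdsWithin_le_nhds).norm.eventually_lt_const (by simpa)
  filter_upwards [hsmall] with t ht y hy
  have hX : ‖fun i => qExp (y i)‖ ≤ B := (pi_norm_le_iff_of_nonneg hB.le).2 hy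
  have hρX : 1 / (4 * B) * ‖fun i => qExp (y i)‖ < 1 / 2 := calc
    _ ≤ 1 / (4 * B) * B := by gcongr
    _ < 1 / 2 := by field_simp; norm_num
  have hlt : ‖qExp t • fun i => qExp (y i)‖ < 1 := by
    rw [norm_smul]
    exact (mul_le_mul_of_nonneg_right ht.le (norm_nonneg _)).trans_lt (hρX.trans one_half_lt_one)
  rw [← nomeLift_eq hper (Y := qExp t • fun i => qExp (y i)) (fun i => by simp [qExp_add])
    (norm_prod_lt_one_of_norm_lt_one hlt), div_mul_eq_mul_div, ← mul_div_assoc', ← div_pow]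
  exact norm_smul_le_of_isBigO_diagonal
    (fun Y hY0 hY => differentiableAt_nomeLift hG hper hY0
      (norm_prod_lt_one_of_norm_lt_one (hY.trans one_half_lt_one)))
    hM'
    (fun μ hμ0 hμ X => nomeLift_diagonal_isBigO hper hdiag hμ0 (hμ.trans one_half_lt_one) X)
    (fun i => qExp_ne_zero _) hρX (qExp_ne_zero _) ht

end NomeLift

section NomeExpansion

variable {f : ℂ → ℂ} {a : ℕ → ℂ}

theorem summable_norm_mul_qExp_pow {τ τ' : ℂ} (hs : Summable fun n => a n * qExp τ ^ n)
    (h : τ.im ≤ τ'.im) : Summable fun n => ‖a n * qExp τ' ^ n‖ :=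
  Summable.of_nonneg_of_le (fun _ => norm_nonneg _) (fun n => by
    simp only [norm_mul, norm_pow]
    gcongr
    exact norm_qExp_le_norm_qExp_iff.2 h) hs.norm

theorem isBigO_one_of_eq_tsum_qExp (hf : DifferentiableOn ℂ f {τ | 0 < τ.im})
    (hfa : ∀ τ : ℂ, 0 < τ.im → f τ = ∑' n, a n * qExp τ ^ n) :
    f =O[I∞] fun _ => (1 : ℝ) := by
  by_cases hs : Summable fun n => a n * qExp I ^ n
  · refine IsBigO.of_bound (∑' n, ‖a n * qExp I ^ n‖) ?_
    filter_upwards [preimage_mem_comap (Ici_mem_atTop 1)] with τ hτ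
    have hsτ := summable_norm_mul_qExp_pow hs (τ' := τ) (by simpa using hτ)
    rw [hfa τ (one_pos.trans_le hτ), norm_one, mul_one]
    refine (norm_tsum_le_tsum_norm hsτ).trans (hsτ.tsum_le_tsum (fun n => ?_) hs.norm)
    simp only [norm_mul, norm_pow]
    gcongr
    exact norm_qExp_le_norm_qExp_iff.2 (by simpa using hτ)
  -- A divergent `tsum` is `0`, so here `f` vanishes on `0 < Im τ < 1`, hence identically.
  · have hzero : ∀ τ : ℂ, 0 < τ.im → τ.im < 1 → f τ = 0 := fun τ hτ hτ1 => by
      rw [hfa τ hτ]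
      exact tsum_eq_zero_of_not_summable fun hsum =>
        hs (summable_norm_mul_qExp_pow hsum (by simpa using hτ1.le)).of_norm
    have hev : f =ᶠ[𝓝 (I / 2)] 0 := by
      have hlow : ∀ᶠ τ : ℂ in 𝓝 (I / 2), 0 < τ.im :=
        continuous_im.continuousAt.eventually_const_lt (by simp)
      have hupp : ∀ᶠ τ : ℂ in 𝓝 (I / 2), τ.im < 1 :=
        continuous_im.continuousAt.eventually_lt_const (by norm_num)
      filter_upwards [hlow, hupp] using hzero
    have hf0 := (hf.analyticOnNhd
      UpperHalfPlane.isOpen_upperHalfPlaneSet).eqOn_zero_of_preconnected_of_eventuallyEq_zero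
      (convex_halfSpace_im_gt 0).isPreconnected (by simp) hev
    refine (isBigO_zero _ _).congr' ?_ EventuallyEq.rfl
    filter_upwards [preimage_mem_comap (Ioi_mem_atTop 0)] with τ hτ using (hf0 hτ).symm

end NomeExpansion

/-! ### A regular simplex in the `E8` lattice -/

section Simplex

theorem zero_mem_E8Lattice : (0 : Fin 8 → ℝ) ∈ E8Lattice :=
  ⟨Or.inl fun _ => ⟨0, by simp⟩, 0, by simp⟩

/-- The vertices of a regular 8-simplex with edges of squared length 2 in the `E8` lattice. -/
def vertex : Fin 9 → Fin 8 → ℝ :=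
  ![0, ![1, 1, 0, 0, 0, 0, 0, 0], ![1, 0, 1, 0, 0, 0, 0, 0], ![1, 0, 0, 1, 0, 0, 0, 0],
    ![1, 0, 0, 0, 1, 0, 0, 0], ![1, 0, 0, 0, 0, 1, 0, 0], ![1, 0, 0, 0, 0, 0, 1, 0],
    ![1, 0, 0, 0, 0, 0, 0, 1], fun _ => 1 / 2]

theorem vertex_mem (i : Fin 9) : vertex i ∈ E8Lattice := by
  fin_cases i
  · exact zero_mem_E8Lattice
  on_goal 8 => exact ⟨Or.inr fun _ => ⟨0, by simp [vertex]⟩, 2, by norm_num [vertex]⟩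
  all_goals
    refine ⟨Or.inl fun l => ?_, 1, by norm_num [vertex, Fin.sum_univ_succ]⟩
    fin_cases l <;> first | exact ⟨0, Int.cast_zero.symm⟩ | exact ⟨1, Int.cast_one.symm⟩

/-- The centroid of the simplex spanned by the vectors `vertex i`, a point of order 3 modulo the
`E8` lattice. -/
def centroid : Fin 8 → ℂ := ![5 / 6, 1 / 6, 1 / 6, 1 / 6, 1 / 6, 1 / 6, 1 / 6, 1 / 6]

theorem sum_vertex : ∑ i, cv (vertex i) = (9 : ℂ) • centroid := by
  funext l
  fin_cases l <;> norm_num [Fin.sum_univ_succ, vertex, cv, centroid]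

theorem three_smul_centroid_mem : ∃ β ∈ E8Lattice, cv β = (3 : ℂ) • centroid := by
  refine ⟨![5 / 2, 1 / 2, 1 / 2, 1 / 2, 1 / 2, 1 / 2, 1 / 2, 1 / 2],
    ⟨Or.inr fun l => ?_, 3, by norm_num [Fin.sum_univ_succ]⟩, funext fun l => ?_⟩
  · refine ⟨if l = 0 then 2 else 0, ?_⟩
    fin_cases l <;> norm_num
  · fin_cases l <;> norm_num [cv, centroid]

theorem centroid_dotProduct_self : centroid ⬝ᵥ centroid = 8 / 9 := by
  norm_num [dotProduct, Fin.sum_univ_succ, centroid]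

theorem centroid_dotProduct_vertex (i : Fin 9) :
    centroid ⬝ᵥ cv (vertex i) = if i = 0 then 0 else 1 := by
  fin_cases i <;> norm_num [dotProduct, Fin.sum_univ_succ, centroid, vertex, cv]

theorem vertex_dotProduct_self (i : Fin 9) :
    cv (vertex i) ⬝ᵥ cv (vertex i) = 2 * (centroid ⬝ᵥ cv (vertex i)) := by
  rw [centroid_dotProduct_vertex]
  fin_cases i <;> norm_num [dotProduct, Fin.sum_univ_succ, vertex, cv]

/-- The position of a vertex of the simplex relative to its centroid. -/
def spoke (i : Fin 9) : Fin 8 → ℂ := cv (vertex i) - centroid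

theorem sum_spoke : ∑ i, spoke i = 0 := by
  simp [spoke, sum_vertex, ← Nat.cast_smul_eq_nsmul ℂ]

/- By symmetry of the regular simplex, its spokes form a tight frame. -/
theorem sum_dotProduct_smul_spoke (z : Fin 8 → ℂ) : ∑ i, (z ⬝ᵥ spoke i) • spoke i = z := by
  funext l
  simp only [Finset.sum_apply, Pi.smul_apply, smul_eq_mul, dotProduct, spoke, Pi.sub_apply, cv]
  fin_cases l <;>
  · simp [Fin.sum_univ_succ, centroid, vertex]
    ring

end Simplex

/-! ### Jacobi forms for the `E8` lattice -/

section JacobiForm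

/-- Jacobi forms of weight `k` and lattice index `m · E8`, without Weyl invariance; holomorphy at
the cusp is relaxed to boundedness as `Im τ → ∞` for each fixed `z`. -/
structure IsE8JacobiForm (k : ℤ) (m : ℕ) (φ : ℂ → (Fin 8 → ℂ) → ℂ) : Prop where
  holo : DifferentiableOn ℂ (fun p : ℂ × (Fin 8 → ℂ) => φ p.1 p.2) {p | 0 < p.1.im}
  quasi_periodic : ∀ α ∈ E8Lattice, ∀ β ∈ E8Lattice, ∀ τ : ℂ, 0 < τ.im → ∀ z : Fin 8 → ℂ,
    φ τ (fun i => z i + τ * (α i : ℂ) + (β i : ℂ)) =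
      exp (-(m : ℂ) * πC * I * (τ * dotC (cv α) (cv α) + 2 * dotC z (cv α))) * φ τ z
  modular : ∀ a b c d : ℤ, a * d - b * c = 1 → ∀ τ : ℂ, 0 < τ.im → ∀ z : Fin 8 → ℂ,
    φ (((a : ℂ) * τ + b) / ((c : ℂ) * τ + d)) (fun i => z i / ((c : ℂ) * τ + d)) =
      ((c : ℂ) * τ + d) ^ k *
        exp ((m : ℂ) * πC * I * (c : ℂ) / ((c : ℂ) * τ + d) * dotC z z) * φ τ z
  isBigO_one : ∀ z : Fin 8 → ℂ, (fun τ => φ τ z) =O[I∞] fun _ => (1 : ℝ)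

variable {k : ℤ} {m : ℕ} {φ : ℂ → (Fin 8 → ℂ) → ℂ}

theorem IsWeakJacobiFormE8.isE8JacobiForm (h : IsWeakJacobiFormE8 k m φ) :
    IsE8JacobiForm k m φ where
  holo := h.holo
  quasi_periodic := h.quasi_periodic
  modular := h.modular
  isBigO_one z := by
    obtain ⟨co, hco⟩ := h.fourier
    refine isBigO_one_of_eq_tsum_qExp (h.holo.comp (g := fun p : ℂ × (Fin 8 → ℂ) => φ p.1 p.2)
        (f := fun τ => (τ, z)) (by fun_prop) fun τ hτ => hτ)
      (a := fun n => ∑' w : E8Lattice, co n w * exp (2 * πC * I * dotC (cv w.1) z)) fun τ hτ => ?_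
    simp only [hco τ hτ z, tsum_mul_right, qExp]

namespace IsE8JacobiForm

theorem differentiableAt_comp {E : Type*} [NormedAddCommGroup E] [NormedSpace ℂ E]
    (h : IsE8JacobiForm k m φ) {f : E → ℂ} {g : E → Fin 8 → ℂ} {x : E}
    (hf : DifferentiableAt ℂ f x) (hg : DifferentiableAt ℂ g x) (hx : 0 < (f x).im) :
    DifferentiableAt ℂ (fun t => φ (f t) (g t)) x := by
  have hopen : IsOpen {p : ℂ × (Fin 8 → ℂ) | 0 < p.1.im} :=
    isOpen_lt continuous_const (by fun_prop)
  exact (h.holo.differentiableAt (hopen.mem_nhds (x := (f x, g x)) hx)).comp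
    (g := fun p : ℂ × (Fin 8 → ℂ) => φ p.1 p.2) x (hf.prodMk hg)

variable {τ : ℂ}

theorem periodic_cv (h : IsE8JacobiForm k m φ) {β : Fin 8 → ℝ} (hβ : β ∈ E8Lattice)
    (hτ : 0 < τ.im) : Periodic (φ τ) (cv β) := fun z => by
  simpa [dotC, cv, Pi.add_def] using h.quasi_periodic 0 zero_mem_E8Lattice β hβ τ hτ z

theorem add_smul_cv (h : IsE8JacobiForm k m φ) {α : Fin 8 → ℝ} (hα : α ∈ E8Lattice)
    (hτ : 0 < τ.im) (z : Fin 8 → ℂ) :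
    φ τ (z + τ • cv α) =
      qExp (-(m * (τ / 2 * (cv α ⬝ᵥ cv α) + z ⬝ᵥ cv α))) * φ τ z := by
  have hquasi := h.quasi_periodic α hα 0 zero_mem_E8Lattice τ hτ z
  simp only [Pi.zero_apply, ofReal_zero, add_zero] at hquasi
  refine hquasi.trans (congrArg (exp · * φ τ z) ?_)
  simp only [dotC, dotProduct]
  ring

theorem add_intCast (h : IsE8JacobiForm k m φ) (n : ℤ) (hτ : 0 < τ.im) (z : Fin 8 → ℂ) :
    φ (τ + n) z = φ τ z := by
  simpa using h.modular 1 n 0 1 (by simp) τ hτ z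

theorem neg_inv_smul (h : IsE8JacobiForm k m φ) (hτ : 0 < τ.im) (z : Fin 8 → ℂ) :
    φ (-τ⁻¹) (τ⁻¹ • z) = τ ^ k * qExp (m * (z ⬝ᵥ z) / (2 * τ)) * φ τ z := by
  have hmod := h.modular 0 (-1) 1 0 (by simp) τ hτ z
  have hexp : (m : ℂ) * πC * I * ((1 : ℤ) : ℂ) / (((1 : ℤ) : ℂ) * τ + ((0 : ℤ) : ℂ)) * dotC z z =
      2 * πC * I * (m * (z ⬝ᵥ z) / (2 * τ)) := by
    simp only [dotC, dotProduct]
    push_cast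
    ring
  rw [hexp] at hmod
  convert hmod using 2
  · simp [neg_div]
  · funext i
    simp [div_eq_inv_mul]
  · simp [qExp]

end IsE8JacobiForm

end JacobiForm

section CoordForm

variable {k : ℤ} {m : ℕ} {φ : ℂ → (Fin 8 → ℂ) → ℂ}

/-- A Jacobi form in the coordinates `y` given by `τ = ∑ y i` and `z = ∑ y i • vertex i`,
normalised so that it is bounded as each `Im (y i) → ∞`. -/
def coordForm (m : ℕ) (φ : ℂ → (Fin 8 → ℂ) → ℂ) (y : Fin 9 → ℂ) : ℂ :=
  qExp (m * (centroid ⬝ᵥ ∑ i, y i • cv (vertex i))) *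
    φ (∑ i, y i) (∑ i, y i • cv (vertex i))

namespace IsE8JacobiForm

theorem differentiableAt_coordForm (h : IsE8JacobiForm k m φ) {y : Fin 9 → ℂ}
    (hy : 0 < (∑ i, y i).im) : DifferentiableAt ℂ (coordForm m φ) y := by
  refine DifferentiableAt.mul ?_ (h.differentiableAt_comp (by fun_prop) (by fun_prop) hy)
  refine (differentiable_qExp _).comp y ?_
  unfold dotProduct
  fun_prop

theorem coordForm_add_intCast (h : IsE8JacobiForm k m φ) {y : Fin 9 → ℂ}
    (hy : 0 < (∑ i, y i).im) (n : Fin 9 → ℤ) :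
    coordForm m φ (fun i => y i + n i) = coordForm m φ y := by
  have hτ : ∑ i, (y i + n i) = ∑ i, y i + (∑ i, n i : ℤ) := by
    push_cast
    exact sum_add_distrib
  have hz : ∑ i, (y i + n i) • cv (vertex i) =
      ∑ i, y i • cv (vertex i) + ∑ i, n i • cv (vertex i) := by
    simp only [add_smul, sum_add_distrib, Int.cast_smul_eq_zsmul]
  have hper : Periodic (φ (∑ i, y i)) (∑ i, n i • cv (vertex i)) :=
    sum_induction _ (Periodic _) (fun _ _ => Periodic.add_period) (fun z => by rw [add_zero])
      fun i _ => (h.periodic_cv (vertex_mem i) hy).zsmul _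
  have hint : m * (centroid ⬝ᵥ ∑ i, n i • cv (vertex i)) =
      (m * ∑ i, if i = 0 then 0 else n i : ℤ) := by
    simp only [dotProduct_sum, dotProduct_smul, centroid_dotProduct_vertex]
    push_cast
    simp
  rw [coordForm, hz, hτ, h.add_intCast _ hy, hper, dotProduct_add, mul_add, qExp_add, hint,
    qExp_intCast, mul_one, coordForm]

theorem exists_coordForm_update_eq (h : IsE8JacobiForm k m φ) (y : Fin 9 → ℂ) (i : Fin 9) :
    ∃ (K c : ℂ) (z : Fin 8 → ℂ), ∀ w : ℂ, 0 < (w + c).im →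
      coordForm m φ (update y i w) = K * φ (w + c) z := by
  set c := ∑ j ∈ univ.erase i, y j
  set z := ∑ j ∈ univ.erase i, y j • cv (vertex j) - c • cv (vertex i) with hz
  refine ⟨qExp (m * (centroid ⬝ᵥ z - z ⬝ᵥ cv (vertex i))), c, z, fun w hw => ?_⟩
  have hupdate : ∀ j ∈ univ.erase i, update y i w j = y j := fun j hj =>
    update_of_ne (ne_of_mem_erase hj) _ _
  have hτ : ∑ j, update y i w j = w + c := by
    rw [← add_sum_erase _ _ (mem_univ i), update_self, sum_congr rfl hupdate]
  have hZ : ∑ j, update y i w j • cv (vertex j) = z + (w + c) • cv (vertex i) := by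
    rw [← add_sum_erase _ _ (mem_univ i), update_self,
      sum_congr rfl fun j hj => by rw [hupdate j hj], hz, add_smul]
    abel
  rw [coordForm, hZ, hτ, h.add_smul_cv (vertex_mem i) hw, vertex_dotProduct_self, ← mul_assoc,
    ← qExp_add]
  congr 2
  simp only [dotProduct_add, dotProduct_smul, smul_eq_mul]
  ring

theorem coordForm_update_isBigO_one (h : IsE8JacobiForm k m φ) (y : Fin 9 → ℂ) (i : Fin 9) :
    (fun w => coordForm m φ (update y i w)) =O[I∞] fun _ => (1 : ℝ) := by
  obtain ⟨K, c, z, hK⟩ := h.exists_coordForm_update_eq y i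
  have him : Tendsto (fun w : ℂ => (w + c).im) I∞ atTop := by
    simpa only [add_im] using tendsto_atTop_add_const_right _ c.im tendsto_comap
  refine (((h.isBigO_one z).comp_tendsto (tendsto_comap_iff.2 him)).const_mul_left K).congr' ?_
    EventuallyEq.rfl
  filter_upwards [him.eventually_gt_atTop 0] with w hw using (hK w hw).symm

theorem exists_norm_coordForm_le (h : IsE8JacobiForm k m φ) {r : Fin 9 → ℝ} (hr0 : ∀ i, 0 < r i)
    (hr : ∏ i, r i < 1) :
    ∃ M, ∀ y : Fin 9 → ℂ, (∀ i, ‖qExp (y i)‖ ≤ r i) → ‖coordForm m φ y‖ ≤ M :=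
  exists_norm_le_of_norm_qExp_le (fun _ => h.differentiableAt_coordForm)
    (fun _ => h.coordForm_add_intCast) h.coordForm_update_isBigO_one hr0 hr

end IsE8JacobiForm

end CoordForm

/-! ### Expansion at points of order 3 -/

section Twist

variable {k : ℤ} {m d : ℕ} {φ : ℂ → (Fin 8 → ℂ) → ℂ} {p r : ℤ} {τ : ℂ}

/-- The translate of `φ` to the 3-torsion point `(p τ + r) • centroid`, normalised so that
`SL₂(ℤ)` permutes these translates through the row vectors `(p, r)`. -/
def twist (m : ℕ) (φ : ℂ → (Fin 8 → ℂ) → ℂ) (p r : ℤ) (τ : ℂ) (z : Fin 8 → ℂ) : ℂ :=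
  qExp (m * (p ^ 2 * (4 / 9) * τ + p * (centroid ⬝ᵥ z))) * φ τ (z + (p * τ + r) • centroid)

theorem coordForm_eq_twist (y : Fin 9 → ℂ) :
    coordForm m φ y =
      qExp (m * (4 / 9) * ∑ i, y i) * twist m φ 1 0 (∑ i, y i) (∑ i, y i • spoke i) := by
  have hz : ∑ i, y i • cv (vertex i) = ∑ i, y i • spoke i + (∑ i, y i) • centroid := by
    simp only [spoke, smul_sub, sum_sub_distrib, sum_smul, sub_add_cancel]
  rw [coordForm, twist, hz, ← mul_assoc, ← qExp_add, dotProduct_add, dotProduct_smul,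
    centroid_dotProduct_self, smul_eq_mul]
  congr 2
  · push_cast
    ring
  · push_cast
    rw [one_mul, add_zero]

namespace IsE8JacobiForm

theorem differentiableAt_twist {E : Type*} [NormedAddCommGroup E] [NormedSpace ℂ E]
    (h : IsE8JacobiForm k m φ) (p r : ℤ) {f : E → ℂ} {g : E → Fin 8 → ℂ} {x : E}
    (hf : DifferentiableAt ℂ f x) (hg : DifferentiableAt ℂ g x) (hx : 0 < (f x).im) :
    DifferentiableAt ℂ (fun t => twist m φ p r (f t) (g t)) x := by
  refine DifferentiableAt.mul ?_ (h.differentiableAt_comp hf (by fun_prop) hx)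
  refine (differentiable_qExp _).comp x ?_
  unfold dotProduct
  fun_prop

theorem differentiable_twist_smul (h : IsE8JacobiForm k m φ) (p r : ℤ) (hτ : 0 < τ.im)
    (z : Fin 8 → ℂ) : Differentiable ℂ fun x : ℂ => twist m φ p r τ (x • z) := fun _ =>
  h.differentiableAt_twist p r (by fun_prop) (by fun_prop) hτ

theorem twist_add_one (h : IsE8JacobiForm k m φ) (p r : ℤ) (hτ : 0 < τ.im) (z : Fin 8 → ℂ) :
    twist m φ p r (τ + 1) z = qExp (m * (p ^ 2 * (4 / 9))) * twist m φ p (p + r) τ z := by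
  have hφ := h.add_intCast 1 hτ
  rw [Int.cast_one] at hφ
  rw [twist, twist, hφ, ← mul_assoc, ← qExp_add]
  congr 2
  · ring
  · push_cast
    ring_nf

theorem twist_neg_inv (h : IsE8JacobiForm k m φ) (p r : ℤ) (hτ : 0 < τ.im) (z : Fin 8 → ℂ) :
    twist m φ p r (-τ⁻¹) (τ⁻¹ • z) =
      τ ^ k * qExp (m * (z ⬝ᵥ z / (2 * τ) - p * r * (8 / 9))) * twist m φ r (-p) τ z := by
  have hτ0 : τ ≠ 0 := by
    rintro rfl
    simp at hτ
  have hpoint : τ⁻¹ • z + ((p : ℂ) * -τ⁻¹ + r) • centroid =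
      τ⁻¹ • (z + ((r : ℂ) * τ + (-p : ℤ)) • centroid) := by
    rw [smul_add, smul_smul]
    congr 2
    push_cast
    field_simp
    ring
  set w := z + ((r : ℂ) * τ + (-p : ℤ)) • centroid with hw
  have hexp : qExp (m * (p ^ 2 * (4 / 9) * -τ⁻¹ + p * (centroid ⬝ᵥ τ⁻¹ • z))) *
      qExp (m * (w ⬝ᵥ w) / (2 * τ)) = qExp (m * (z ⬝ᵥ z / (2 * τ) - p * r * (8 / 9))) *
        qExp (m * (r ^ 2 * (4 / 9) * τ + r * (centroid ⬝ᵥ z))) := by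
    rw [← qExp_add, ← qExp_add, hw]
    congr 1
    simp only [dotProduct_add, add_dotProduct, dotProduct_smul, smul_dotProduct,
      centroid_dotProduct_self, dotProduct_comm z centroid, smul_eq_mul]
    push_cast
    field_simp
    ring
  rw [twist, hpoint, h.neg_inv_smul hτ, twist]
  linear_combination τ ^ k * φ τ w * hexp

theorem twist_add_three (h : IsE8JacobiForm k m φ) (p r : ℤ) (hτ : 0 < τ.im) (z : Fin 8 → ℂ) :
    twist m φ p (r + 3) τ z = twist m φ p r τ z := by
  obtain ⟨β, hβ, hβu⟩ := three_smul_centroid_mem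
  have hpoint : z + ((p : ℂ) * τ + (r + 3 : ℤ)) • centroid =
      z + ((p : ℂ) * τ + r) • centroid + cv β := by
    rw [hβu]
    push_cast
    module
  rw [twist, twist, hpoint, h.periodic_cv hβ hτ]

end IsE8JacobiForm

/-- `twist m φ p r τ` vanishes to order at least `d` at the origin, tested along complex lines. -/
def TwistVanishes (m : ℕ) (φ : ℂ → (Fin 8 → ℂ) → ℂ) (p r : ℤ) (d : ℕ) : Prop :=
  ∀ τ : ℂ, 0 < τ.im → ∀ z : Fin 8 → ℂ,
    (fun x : ℂ => twist m φ p r τ (x • z)) =O[𝓝 0] fun x => x ^ d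

theorem TwistVanishes.exists_eventually_norm_le (hv : TwistVanishes m φ p r d)
    (h : IsE8JacobiForm k m φ) (hτ : 0 < τ.im) :
    ∃ M, ∀ᶠ τ' in 𝓝 τ, ∀ z, ‖z‖ < 1 → ‖twist m φ p r τ' z‖ ≤ M * ‖z‖ ^ d := by
  obtain ⟨K, hK, hτK, hK0⟩ := exists_compact_subset (U := {τ : ℂ | 0 < τ.im})
    (isOpen_lt continuous_const continuous_im) hτ
  obtain ⟨M, hM⟩ := (hK.prod (isCompact_closedBall (0 : Fin 8 → ℂ) 1)).exists_bound_of_continuousOn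
    (f := fun q => twist m φ p r q.1 q.2) fun q hq =>
      (h.differentiableAt_twist p r (by fun_prop) (by fun_prop)
        (hK0 hq.1)).continuousAt.continuousWithinAt
  refine ⟨M, ?_⟩
  filter_upwards [mem_interior_iff_mem_nhds.1 hτK] with τ' hτ' z hz
  have hline : (‖z‖ : ℂ) • ‖z‖⁻¹ • z = z := by
    rw [Complex.coe_smul]
    exact NormedSpace.norm_smul_normalize z
  have hunit : ∀ x ∈ ball (0 : ℂ) 1, ‖twist m φ p r τ' (x • ‖z‖⁻¹ • z)‖ ≤ M := fun x hx => by
    refine hM (τ', _) ⟨hτ', mem_closedBall_zero_iff.2 ?_⟩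
    rw [norm_smul, norm_smul, norm_inv, norm_norm]
    exact mul_le_one₀ (mem_ball_zero_iff.1 hx).le (by positivity) (inv_mul_le_one ..)
  simpa [hline] using norm_le_of_isBigO_pow (x := (‖z‖ : ℂ))
    (h.differentiable_twist_smul p r (hK0 hτ') _).differentiableOn hunit (hv τ' (hK0 hτ') _)
    (by simpa using hz)

theorem TwistVanishes.coordForm_isBigO (hv : TwistVanishes m φ 1 0 d) (h : IsE8JacobiForm k m φ)
    {c : ℂ} (hc : 0 < c.im) :
    (fun v : Fin 9 → ℂ => coordForm m φ fun i => c + v i) =O[𝓝 0] fun v => ‖v‖ ^ d := by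
  set T : (Fin 9 → ℂ) → ℂ := fun v => ∑ i, (c + v i) with hT
  set Z : (Fin 9 → ℂ) → Fin 8 → ℂ := fun v => ∑ i, v i • spoke i with hZ
  have hcoord : ∀ v : Fin 9 → ℂ, coordForm m φ (fun i => c + v i) =
      qExp (m * (4 / 9) * T v) * twist m φ 1 0 (T v) (Z v) := fun v => by
    simp only [coordForm_eq_twist, add_smul, sum_add_distrib, ← smul_sum, sum_spoke, smul_zero,
      zero_add, hT, hZ]
  have hTc : ContinuousAt T 0 := by fun_prop
  have hZ0 : Z 0 = 0 := by simp [hZ]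
  have hZd : DifferentiableAt ℂ Z 0 := by fun_prop
  have hZO : Z =O[𝓝 0] fun v => ‖v‖ := by simpa [hZ0] using hZd.isBigO_sub.norm_right
  have hT0 : 0 < (T 0).im := by simpa [hT] using hc
  obtain ⟨M, hM⟩ := hv.exists_eventually_norm_le h hT0
  have htwist : (fun v => twist m φ 1 0 (T v) (Z v)) =O[𝓝 0] fun v => ‖Z v‖ ^ d := by
    refine IsBigO.of_bound M ?_
    have hZ1 : ∀ᶠ v in 𝓝 0, ‖Z v‖ < 1 :=
      hZd.continuousAt.norm.eventually_lt continuousAt_const (by simp [hZ0])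
    filter_upwards [hTc.eventually hM, hZ1] with v hv hv1
    simpa using hv _ hv1
  have hqExp : (fun v => qExp (m * (4 / 9) * T v)) =O[𝓝 0] fun _ => (1 : ℝ) :=
    ((differentiable_qExp _).continuousAt.comp (continuousAt_const.mul hTc)).isBigO_one ℝ
  simpa only [hcoord, one_mul] using hqExp.mul (htwist.trans (hZO.norm_left.pow d))

end Twist

/-! ### Behaviour at the cusp -/

section Cusp

variable {k : ℤ} {m d : ℕ} {φ : ℂ → (Fin 8 → ℂ) → ℂ}

theorem eventually_norm_qExp_dotProduct_spoke_le :
    ∀ᶠ z : Fin 8 → ℂ in 𝓝 0, ∀ i, ‖qExp (z ⬝ᵥ spoke i)‖ ≤ 2 := by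
  refine eventually_all.2 fun i => ?_
  have hcont : Continuous fun z : Fin 8 → ℂ => ‖qExp (z ⬝ᵥ spoke i)‖ :=
    (differentiable_qExp.continuous.comp (by unfold dotProduct; fun_prop)).norm
  refine (hcont.tendsto 0).eventually_le_const ?_
  simp [qExp]

theorem sum_dotProduct_spoke (z : Fin 8 → ℂ) : ∑ i, z ⬝ᵥ spoke i = 0 := by
  rw [← dotProduct_sum, sum_spoke, dotProduct_zero]

theorem coordForm_div_nine_add (τ : ℂ) (z : Fin 8 → ℂ) :
    coordForm m φ (fun i => τ / 9 + z ⬝ᵥ spoke i) =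
      qExp (m * (4 / 9) * τ) * twist m φ 1 0 τ z := by
  have hτ : ∑ i, (τ / 9 + z ⬝ᵥ spoke i) = τ := by
    simp [sum_add_distrib, sum_dotProduct_spoke, mul_div_cancel₀]
  simp only [coordForm_eq_twist, hτ, add_smul, sum_add_distrib, ← smul_sum, sum_spoke, smul_zero,
    zero_add, sum_dotProduct_smul_spoke]

theorem coordForm_ninth_add (τ : ℂ) (z : Fin 8 → ℂ) :
    coordForm m φ (fun i => 1 / 9 + z ⬝ᵥ spoke i + if i = 0 then τ - 1 else 0) =
      qExp (m * (centroid ⬝ᵥ z + 8 / 9)) * twist m φ 0 1 τ z := by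
  have hτ : ∑ i : Fin 9, (1 / 9 + z ⬝ᵥ spoke i + if i = 0 then τ - 1 else 0) = τ := by
    simp [sum_add_distrib, sum_dotProduct_spoke]
  have hvertex : ∀ i : Fin 9, (if i = 0 then τ - 1 else 0) • cv (vertex i) = 0 := by
    intro i
    split_ifs with hi
    · ext
      simp [hi, vertex, cv]
    · exact zero_smul ..
  have hz : ∑ i : Fin 9, (1 / 9 + z ⬝ᵥ spoke i + if i = 0 then τ - 1 else 0) • cv (vertex i) =
      z + centroid := by
    have hspoke : ∑ i, (z ⬝ᵥ spoke i) • cv (vertex i) = z := by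
      have hadd : ∀ i, cv (vertex i) = spoke i + centroid := fun i => (sub_add_cancel ..).symm
      simp only [hadd, smul_add, sum_add_distrib, ← sum_smul, sum_dotProduct_smul_spoke,
        sum_dotProduct_spoke, zero_smul, add_zero]
    simp only [add_smul, sum_add_distrib, hvertex, hspoke, ← smul_sum, sum_vertex, smul_smul]
    simp [add_comm]
  rw [coordForm, hτ, hz, twist, dotProduct_add, centroid_dotProduct_self]
  simp [qExp]

theorem TwistVanishes.twist_one_zero_isBigO (hv : TwistVanishes m φ 1 0 d)
    (h : IsE8JacobiForm k m φ) :
    (fun q : ℂ × (Fin 8 → ℂ) => twist m φ 1 0 q.1 q.2) =O[I∞ ×ˢ 𝓝 0]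
      fun q => qExp ((d - 4 * m) / 9 * q.1) := by
  obtain ⟨M, hM⟩ := exists_eventually_norm_add_le_of_isBigO_diagonal
    (fun _ => h.differentiableAt_coordForm) (fun _ => h.coordForm_add_intCast)
    h.coordForm_update_isBigO_one (fun _ => hv.coordForm_isBigO h) two_pos
  have hdiv : Tendsto (fun τ : ℂ => τ / 9) I∞ I∞ := by
    refine tendsto_comap_iff.2 ((tendsto_comap.atTop_div_const (r := 9) (by norm_num)).congr ?_)
    simp [div_ofNat_im]
  refine IsBigO.of_bound M ?_
  filter_upwards [(hdiv.eventually hM).prod_mk eventually_norm_qExp_dotProduct_spoke_le]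
    with ⟨τ, z⟩ ⟨hτ, hz⟩
  have hpow : qExp (τ / 9) ^ d = qExp (m * (4 / 9) * τ) * qExp ((d - 4 * m) / 9 * τ) := by
    rw [← qExp_natCast_mul, ← qExp_add]
    ring_nf
  have hbound := hτ _ hz
  rw [coordForm_div_nine_add, ← norm_pow, hpow, norm_mul, norm_mul, mul_left_comm] at hbound
  exact le_of_mul_le_mul_left hbound (norm_pos_iff.2 (qExp_ne_zero _))

theorem IsE8JacobiForm.twist_zero_one_isBigO (h : IsE8JacobiForm k m φ) :
    (fun q : ℂ × (Fin 8 → ℂ) => twist m φ 0 1 q.1 q.2) =O[I∞ ×ˢ 𝓝 0] fun _ => (1 : ℂ) := by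
  obtain ⟨M, hM⟩ := h.exists_norm_coordForm_le (r := fun i => if i = 0 then 1 / 600 else 2)
    (fun i => by split_ifs <;> norm_num) (by norm_num [Fin.prod_univ_succ])
  have hτ : ∀ᶠ τ in I∞, ‖qExp (τ - 1)‖ ≤ 1 / 1200 := by
    have hlim : Tendsto (fun τ => ‖qExp τ‖) I∞ (𝓝 0) :=
      tendsto_zero_iff_norm_tendsto_zero.1 (tendsto_qExp_atImInfty.mono_right nhdsWithin_le_nhds)
    filter_upwards [hlim.eventually_le_const (u := 1 / 1200) (by norm_num)] with τ hτ
    simpa [norm_qExp] using hτ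
  have hcoord : (fun q : ℂ × (Fin 8 → ℂ) =>
      coordForm m φ fun i => 1 / 9 + q.2 ⬝ᵥ spoke i + if i = 0 then q.1 - 1 else 0)
      =O[I∞ ×ˢ 𝓝 0] fun _ => (1 : ℂ) := by
    refine IsBigO.of_bound M ?_
    filter_upwards [hτ.prod_mk eventually_norm_qExp_dotProduct_spoke_le] with ⟨τ, z⟩ ⟨hτ, hz⟩
    rw [norm_one, mul_one]
    refine hM _ fun i => ?_
    have hninth : ‖qExp (1 / 9)‖ = 1 := by simp [norm_qExp]
    rw [qExp_add, qExp_add, norm_mul, norm_mul, hninth, one_mul]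
    split_ifs with hi
    · exact (mul_le_mul (hz i) hτ (norm_nonneg _) two_pos.le).trans_eq (by norm_num)
    · simpa [qExp] using hz i
  have hqExp : (fun q : ℂ × (Fin 8 → ℂ) => qExp (-(m * (centroid ⬝ᵥ q.2 + 8 / 9))))
      =O[I∞ ×ˢ 𝓝 0] fun _ => (1 : ℂ) := by
    have hcont : Continuous fun z => qExp (-(m * (centroid ⬝ᵥ z + 8 / 9))) :=
      differentiable_qExp.continuous.comp (by unfold dotProduct; fun_prop)
    exact (hcont.continuousAt.isBigO_one ℂ).comp_tendsto tendsto_snd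
  refine (hqExp.mul hcoord).congr (fun q => ?_) fun _ => mul_one 1
  rw [coordForm_ninth_add, ← mul_assoc, ← qExp_add, neg_add_cancel]
  simp [qExp]

end Cusp

/-! ### Modular forms of level one and permuted families -/

section LevelOne

open UpperHalfPlane ModularForm MatrixGroups

/-- Holomorphic modular forms of weight `w` for `SL(2, ℤ)`, without a growth condition at the cusp,
as functions on `ℂ` constrained only on the upper half-plane. -/
structure IsWeaklyModular (w : ℤ) (f : ℂ → ℂ) : Prop where
  differentiableOn : DifferentiableOn ℂ f {τ | 0 < τ.im}
  add_one : ∀ τ : ℂ, 0 < τ.im → f (τ + 1) = f τ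
  neg_inv : ∀ τ : ℂ, 0 < τ.im → f (-τ⁻¹) = τ ^ w * f τ

variable {w w' : ℤ} {f g : ℂ → ℂ}

theorem im_neg_inv_pos {τ : ℂ} (hτ : 0 < τ.im) : 0 < (-τ⁻¹).im := by
  simpa using (⟨τ, hτ⟩ : ℍ).im_inv_neg_coe_pos

theorem slash_S_apply (f : ℂ → ℂ) (w : ℤ) (τ : ℍ) :
    ((fun τ : ℍ => f τ) ∣[w] ModularGroup.S) τ = f (-(τ : ℂ)⁻¹) * (τ : ℂ) ^ (-w) := by
  rw [SL_slash_apply, modular_S_smul, ModularGroup.denom_S, coe_mk, inv_neg]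

theorem slash_T_apply (f : ℂ → ℂ) (w : ℤ) (τ : ℍ) :
    ((fun τ : ℍ => f τ) ∣[w] ModularGroup.T) τ = f (τ + 1) := by
  have hdenom : denom (ModularGroup.T : GL (Fin 2) ℝ) τ = 1 := by
    rw [ModularGroup.denom_apply]
    simp [ModularGroup.T]
  rw [SL_slash_apply, modular_T_smul, hdenom, one_zpow, mul_one, UpperHalfPlane.coe_vadd,
    ofReal_one, add_comm]

theorem isWeaklyModular_eta_pow : IsWeaklyModular 12 fun τ => ModularForm.eta τ ^ 24 where
  differentiableOn τ hτ :=
    ((differentiableAt_eta_of_mem_upperHalfPlaneSet hτ).pow 24).differentiableWithinAt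
  add_one τ hτ := (slash_T_apply (fun τ => ModularForm.eta τ ^ 24) 12 ⟨τ, hτ⟩).symm.trans <|
    congrFun discriminant_T_invariant ⟨τ, hτ⟩
  neg_inv τ hτ := by
    have hS : ModularForm.eta (-τ⁻¹) ^ 24 * τ ^ (-12 : ℤ) = ModularForm.eta τ ^ 24 :=
      (slash_S_apply (fun τ => ModularForm.eta τ ^ 24) 12 ⟨τ, hτ⟩).symm.trans <|
        congrFun discriminant_S_invariant ⟨τ, hτ⟩
    have hτ0 : τ ≠ 0 := fun h0 => by simp [h0] at hτ
    rw [← hS, mul_left_comm, ← zpow_add₀ hτ0, add_neg_cancel, zpow_zero, mul_one]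

theorem eta_pow_isTheta_qExp : (fun τ => ModularForm.eta τ ^ 24) =Θ[I∞] qExp := by
  have hlim := tendsto_atImInfty_tprod_one_sub_eta_q_pow.comp tendsto_comap_im_ofComplex
  refine (isTheta_of_div_tendsto_nhds_ne_zero (hlim.congr' ?_) one_ne_zero).symm
  filter_upwards [tendsto_comap.eventually (eventually_gt_atTop 0)] with τ hτ
  have hprod := discriminant_eq_q_prod ⟨τ, hτ⟩
  rw [← qExp_eq_qParam] at hprod
  rw [comp_apply, ofComplex_apply_of_im_pos hτ]
  exact ((div_eq_iff (qExp_ne_zero τ)).2 (hprod.trans (mul_comm ..))).symm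

theorem exists_eq_zero_of_prod_eq_zero {ι : Type*} {f : ι → ℂ → ℂ} {U : Set ℂ} (hU : IsOpen U)
    (hconn : IsConnected U) (s : Finset ι) (hf : ∀ i ∈ s, DifferentiableOn ℂ (f i) U)
    (h0 : ∀ z ∈ U, ∏ i ∈ s, f i z = 0) : ∃ i ∈ s, ∀ z ∈ U, f i z = 0 := by
  induction s using Finset.cons_induction with
  | empty => exact absurd (h0 _ hconn.nonempty.some_mem) one_ne_zero
  | cons i s hi ih =>
    simp only [mem_cons, forall_eq_or_imp, exists_eq_or_imp, prod_cons] at hf h0 ⊢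
    refine ((hf.1.analyticOnNhd hU).eq_zero_or_eq_zero_of_mul_eq_zero
      ((DifferentiableOn.fun_finsetProd hf.2).analyticOnNhd hU) h0 hconn.isPreconnected).imp_right
      (ih hf.2)

theorem IsWeaklyModular.mul (hf : IsWeaklyModular w f) (hg : IsWeaklyModular w' g) :
    IsWeaklyModular (w + w') fun τ => f τ * g τ where
  differentiableOn := hf.differentiableOn.mul hg.differentiableOn
  add_one τ hτ := by rw [hf.add_one τ hτ, hg.add_one τ hτ]
  neg_inv τ hτ := by
    have hτ0 : τ ≠ 0 := fun h0 => by simp [h0] at hτ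
    rw [hf.neg_inv τ hτ, hg.neg_inv τ hτ, zpow_add₀ hτ0, mul_mul_mul_comm]

theorem IsWeaklyModular.zpow (hf : IsWeaklyModular w f) (hne : ∀ τ, 0 < τ.im → f τ ≠ 0) (n : ℤ) :
    IsWeaklyModular (w * n) fun τ => f τ ^ n where
  differentiableOn := hf.differentiableOn.zpow (Or.inl hne)
  add_one τ hτ := by rw [hf.add_one τ hτ]
  neg_inv τ hτ := by rw [hf.neg_inv τ hτ, mul_zpow, zpow_mul]

theorem IsWeaklyModular.eq_zero_of_neg_weight (hf : IsWeaklyModular w f) (hw : w < 0)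
    (hO : f =O[I∞] fun _ => (1 : ℂ)) {τ : ℂ} (hτ : 0 < τ.im) : f τ = 0 := by
  have hS : (fun τ : ℍ => f τ) ∣[w] ModularGroup.S = fun τ : ℍ => f τ := by
    funext τ
    rw [slash_S_apply, hf.neg_inv τ τ.im_pos, mul_right_comm, ← zpow_add₀ τ.ne_zero,
      add_neg_cancel, zpow_zero, one_mul]
  have hT : (fun τ : ℍ => f τ) ∣[w] ModularGroup.T = fun τ : ℍ => f τ := by
    funext τ
    rw [slash_T_apply, hf.add_one τ τ.im_pos]
  let F : ModularForm 𝒮ℒ w :=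
    { toFun := fun τ : ℍ => f τ
      slash_action_eq' := by
        rintro A ⟨A, rfl⟩
        exact SlashInvariantForm.slash_action_generators_SL2Z hS hT A
      holo' := by
        rw [UpperHalfPlane.mdifferentiable_iff]
        exact hf.differentiableOn.congr fun z hz => by simp [ofComplex_apply_of_im_pos hz]
      bdd_at_cusps' := by
        intro c hc
        rw [Subgroup.IsArithmetic.isCusp_iff_isCusp_SL2Z] at hc
        rw [OnePoint.isBoundedAt_iff_forall_SL2Z hc]
        intro γ _
        rw [SlashInvariantForm.slash_action_generators_SL2Z hS hT]
        exact (hO.comp_tendsto tendsto_coe_atImInfty).trans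
          (isBigO_const_const _ one_ne_zero _) }
  exact congrFun (ModularFormClass.levelOne_neg_weight_eq_zero hw F) ⟨τ, hτ⟩

theorem IsWeaklyModular.eq_zero_of_isBigO_qExp {n : ℤ} (hf : IsWeaklyModular w f)
    (hw : w < 12 * n) (hO : f =O[I∞] fun τ => qExp (n * τ)) {τ : ℂ} (hτ : 0 < τ.im) :
    f τ = 0 := by
  have hne : ∀ τ : ℂ, 0 < τ.im → ModularForm.eta τ ^ 24 ≠ 0 := fun τ hτ =>
    discriminant_ne_zero ⟨τ, hτ⟩
  have hquot := hf.mul (isWeaklyModular_eta_pow.zpow hne (-n))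
  have hbound : (fun τ => f τ * (ModularForm.eta τ ^ 24) ^ (-n)) =O[I∞] fun _ => (1 : ℂ) := by
    refine (hO.mul (eta_pow_isTheta_qExp.zpow (-n)).isBigO).congr_right fun τ => ?_
    rw [qExp_intCast_mul, ← zpow_add₀ (qExp_ne_zero τ), add_neg_cancel, zpow_zero]
  exact (mul_eq_zero.1 (hquot.eq_zero_of_neg_weight (by linarith) hbound hτ)).resolve_right
    (zpow_ne_zero _ (hne τ hτ))

/-- A vector-valued modular form of weight `w`, without a growth condition, for which the
generators `T` and `S` of `SL(2, ℤ)` permute the components. -/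
structure IsPermutedFamily {ι : Type*} (w : ℤ) (T S : Equiv.Perm ι) (f : ι → ℂ → ℂ) : Prop where
  differentiableOn : ∀ i, DifferentiableOn ℂ (f i) {τ | 0 < τ.im}
  add_one : ∀ i, ∀ τ : ℂ, 0 < τ.im → f i (τ + 1) = f (T i) τ
  neg_inv : ∀ i, ∀ τ : ℂ, 0 < τ.im → f i (-τ⁻¹) = τ ^ w * f (S i) τ

namespace IsPermutedFamily

variable {ι : Type*} {T S : Equiv.Perm ι} {f : ι → ℂ → ℂ}

theorem prod [Fintype ι] (hf : IsPermutedFamily w T S f) :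
    IsWeaklyModular (w * Fintype.card ι) fun τ => ∏ i, f i τ where
  differentiableOn := DifferentiableOn.fun_finsetProd fun i _ => hf.differentiableOn i
  add_one τ hτ := by
    simp only [hf.add_one _ τ hτ]
    exact Equiv.prod_comp T (f · τ)
  neg_inv τ hτ := by
    simp only [hf.neg_inv _ τ hτ, prod_mul_distrib, prod_const, card_univ, zpow_mul, zpow_natCast]
    rw [Equiv.prod_comp S (f · τ)]

theorem isBigO_qExp_perm (hf : IsPermutedFamily w T S f) {c : ℂ} {i : ι}
    (hO : f i =O[I∞] fun τ => qExp (c * τ)) : f (T i) =O[I∞] fun τ => qExp (c * τ) := by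
  have hshift : Tendsto (fun τ : ℂ => τ + 1) I∞ I∞ := tendsto_comap_iff.2 <| by
    simpa [Function.comp_def] using tendsto_comap
  have hqExp : (fun τ => qExp (c * (τ + 1))) =O[I∞] fun τ => qExp (c * τ) := by
    refine (isBigO_const_mul_self (qExp c) (fun τ => qExp (c * τ)) I∞).congr_left fun τ => ?_
    rw [← qExp_add]
    ring_nf
  refine ((hO.comp_tendsto hshift).trans hqExp).congr' ?_ EventuallyEq.rfl
  filter_upwards [tendsto_comap.eventually (eventually_gt_atTop 0)] with τ hτ
  exact hf.add_one i τ hτ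

theorem eq_zero_perm_left (hf : IsPermutedFamily w T S f) {i : ι}
    (h0 : ∀ τ : ℂ, 0 < τ.im → f i τ = 0) {τ : ℂ} (hτ : 0 < τ.im) : f (T i) τ = 0 := by
  rw [← hf.add_one i τ hτ, h0 _ (by simpa using hτ)]

theorem eq_zero_perm_right (hf : IsPermutedFamily w T S f) {i : ι}
    (h0 : ∀ τ : ℂ, 0 < τ.im → f i τ = 0) {τ : ℂ} (hτ : 0 < τ.im) : f (S i) τ = 0 := by
  have hτ0 : τ ≠ 0 := fun h0 => by simp [h0] at hτ
  have hmul := hf.neg_inv i τ hτ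
  rw [h0 _ (im_neg_inv_pos hτ)] at hmul
  exact (mul_eq_zero.1 hmul.symm).resolve_left (zpow_ne_zero _ hτ0)

end IsPermutedFamily

/-- Row vectors representing the four lines of `(ℤ/3)²`. -/
def linePoint : Fin 4 → ℤ × ℤ := ![(0, 1), (1, 0), (1, 1), (1, -1)]

/-- The permutation of the lines spanned by `linePoint` induced by `T : (p, r) ↦ (p, p + r)`. -/
def lineT : Equiv.Perm (Fin 4) := Equiv.swap 1 2 * Equiv.swap 2 3

/-- The permutation of the lines spanned by `linePoint` induced by `S : (p, r) ↦ (r, -p)`. -/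
def lineS : Equiv.Perm (Fin 4) := Equiv.swap 0 1 * Equiv.swap 2 3

theorem linePoint_lineT : ∀ i, (linePoint (lineT i)).1 = (linePoint i).1 ∧
    ((linePoint (lineT i)).2 = (linePoint i).1 + (linePoint i).2 ∨
      (linePoint (lineT i)).2 + 3 = (linePoint i).1 + (linePoint i).2) := by
  decide

theorem linePoint_lineS : ∀ i, linePoint (lineS i) = ((linePoint i).2, -(linePoint i).1) ∨
    linePoint (lineS i) = (-(linePoint i).2, (linePoint i).1) := by
  decide

theorem eq_univ_of_lineT_mem_of_lineS_mem : ∀ Z : Finset (Fin 4), Z.Nonempty →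
    (∀ i ∈ Z, lineT i ∈ Z) → (∀ i ∈ Z, lineS i ∈ Z) → Z = univ := by
  decide

theorem IsPermutedFamily.eq_zero_of_isBigO_qExp {f : Fin 4 → ℂ → ℂ} {n : ℤ}
    (hf : IsPermutedFamily w lineT lineS f) (hw : w < 9 * n) (h0 : f 0 =O[I∞] fun _ => (1 : ℂ))
    (h1 : f 1 =O[I∞] fun τ => qExp (n * τ)) (i : Fin 4) {τ : ℂ} (hτ : 0 < τ.im) : f i τ = 0 := by
  have h2 : f 2 =O[I∞] fun τ => qExp (n * τ) := hf.isBigO_qExp_perm h1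
  have h3 : f 3 =O[I∞] fun τ => qExp (n * τ) := hf.isBigO_qExp_perm h2
  have hprod : (fun τ => ∏ i, f i τ) =O[I∞] fun τ => qExp ((3 * n : ℤ) * τ) := by
    simp only [Fin.prod_univ_four]
    refine (((h0.mul h1).mul h2).mul h3).congr_right fun τ => ?_
    rw [one_mul, ← qExp_add, ← qExp_add]
    push_cast
    ring_nf
  have hweight : w * Fintype.card (Fin 4) < 12 * (3 * n) := by
    rw [Fintype.card_fin]
    push_cast
    linarith
  obtain ⟨j, -, hj⟩ := exists_eq_zero_of_prod_eq_zero isOpen_upperHalfPlaneSet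
    ⟨⟨Complex.I, by simp⟩, (convex_halfSpace_im_gt 0).isPreconnected⟩ univ
    (fun i _ => hf.differentiableOn i) fun τ => hf.prod.eq_zero_of_isBigO_qExp hweight hprod
  classical
  have hall := eq_univ_of_lineT_mem_of_lineS_mem {i | ∀ τ : ℂ, 0 < τ.im → f i τ = 0}
    ⟨j, by simpa using hj⟩ (by simpa using fun i hi τ => hf.eq_zero_perm_left hi)
    (by simpa using fun i hi τ => hf.eq_zero_perm_right hi)
  exact (mem_filter.1 (hall.ge (mem_univ i))).2 τ hτ

end LevelOne

/-! ### Leading coefficients -/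

section LeadCoeff

variable {k : ℤ} {m d : ℕ} {φ : ℂ → (Fin 8 → ℂ) → ℂ} {p r : ℤ} {τ : ℂ} {z : Fin 8 → ℂ}

namespace TwistVanishes

theorem add_left (hv : TwistVanishes m φ p r d) (h : IsE8JacobiForm k m φ) :
    TwistVanishes m φ p (p + r) d := by
  intro τ hτ z
  refine ((hv (τ + 1) (by simpa using hτ) z).const_mul_left
    (qExp (m * (p ^ 2 * (4 / 9))))⁻¹).congr_left fun x => ?_
  rw [h.twist_add_one p r hτ, inv_mul_cancel_left₀ (qExp_ne_zero _)]

theorem rotate (hv : TwistVanishes m φ p r d) (h : IsE8JacobiForm k m φ) :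
    TwistVanishes m φ r (-p) d := by
  intro τ hτ z
  have hτ0 : τ ≠ 0 := fun h0 => by simp [h0] at hτ
  set c : ℂ → ℂ := fun x =>
    τ ^ k * qExp (m * ((x • z) ⬝ᵥ (x • z) / (2 * τ) - p * r * (8 / 9)))
  have hne : ∀ x, c x ≠ 0 := fun x => mul_ne_zero (zpow_ne_zero _ hτ0) (qExp_ne_zero _)
  have hcont : Continuous c := continuous_const.mul <|
    differentiable_qExp.continuous.comp (by unfold dotProduct; fun_prop)
  have hinv : (fun x => (c x)⁻¹) =O[𝓝 0] fun _ => (1 : ℂ) :=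
    (hcont.continuousAt.inv₀ (hne 0)).isBigO_one ℂ
  refine (hinv.mul (hv (-τ⁻¹) (im_neg_inv_pos hτ) (τ⁻¹ • z))).congr (fun x => ?_) fun x => one_mul _
  rw [smul_comm, h.twist_neg_inv p r hτ]
  exact inv_mul_cancel_left₀ (hne x) _

theorem of_add_three (hv : TwistVanishes m φ p (r + 3) d) (h : IsE8JacobiForm k m φ) :
    TwistVanishes m φ p r d := fun τ hτ z =>
  (hv τ hτ z).congr_left fun _ => h.twist_add_three p r hτ _

end TwistVanishes

/-- The coefficient of `x ^ d` in the expansion of `twist m φ p r τ (x • z)` at `x = 0`, meaningful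
when `TwistVanishes m φ p r d`. -/
def leadCoeff (m : ℕ) (φ : ℂ → (Fin 8 → ℂ) → ℂ) (d : ℕ) (z : Fin 8 → ℂ) (p r : ℤ) (τ : ℂ) : ℂ :=
  limUnder (𝓝[≠] 0) fun x : ℂ => twist m φ p r τ (x • z) / x ^ d

namespace TwistVanishes

theorem tendsto_leadCoeff (hv : TwistVanishes m φ p r d) (h : IsE8JacobiForm k m φ)
    (hτ : 0 < τ.im) (z : Fin 8 → ℂ) :
    Tendsto (fun x : ℂ => twist m φ p r τ (x • z) / x ^ d) (𝓝[≠] 0)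
      (𝓝 (leadCoeff m φ d z p r τ)) :=
  tendsto_limUnder_div_pow (h.differentiable_twist_smul p r hτ z) (hv τ hτ z)

theorem differentiableOn_leadCoeff (hv : TwistVanishes m φ p r d) (h : IsE8JacobiForm k m φ) :
    DifferentiableOn ℂ (leadCoeff m φ d z p r) {τ | 0 < τ.im} :=
  differentiableOn_limUnder_div_pow (h := fun τ x => twist m φ p r τ (x • z))
    (isOpen_lt continuous_const continuous_im)
    (fun _ hq => (h.differentiableAt_twist p r (by fun_prop) (by fun_prop)
      hq.1).differentiableWithinAt) fun τ hτ => hv τ hτ z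

theorem leadCoeff_add_one (hv : TwistVanishes m φ p r d) (h : IsE8JacobiForm k m φ)
    (hτ : 0 < τ.im) :
    leadCoeff m φ d z p r (τ + 1) =
      qExp (m * (p ^ 2 * (4 / 9))) * leadCoeff m φ d z p (p + r) τ := by
  refine tendsto_nhds_unique (hv.tendsto_leadCoeff h (by simpa using hτ) z)
    ((((hv.add_left h).tendsto_leadCoeff h hτ z).const_mul _).congr fun x => ?_)
  rw [h.twist_add_one p r hτ, mul_div_assoc]

theorem leadCoeff_neg_inv (hv : TwistVanishes m φ p r d) (h : IsE8JacobiForm k m φ)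
    (hτ : 0 < τ.im) :
    leadCoeff m φ d z p r (-τ⁻¹) =
      τ ^ (k + d) * qExp (-(m * (p * r * (8 / 9)))) * leadCoeff m φ d z r (-p) τ := by
  have hτ0 : τ ≠ 0 := fun h0 => by simp [h0] at hτ
  have hscale : Tendsto (fun x : ℂ => τ⁻¹ * x) (𝓝[≠] 0) (𝓝[≠] 0) :=
    tendsto_nhdsWithin_iff.2 ⟨((continuous_const_mul τ⁻¹).tendsto' 0 0 (mul_zero _)).mono_left
      nhdsWithin_le_nhds, eventually_nhdsWithin_of_forall fun _ =>
        mul_ne_zero (inv_ne_zero hτ0)⟩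
  have hfactor : Tendsto (fun x : ℂ => τ ^ (k + d) *
      qExp (m * ((x • z) ⬝ᵥ (x • z) / (2 * τ) - p * r * (8 / 9)))) (𝓝[≠] 0)
      (𝓝 (τ ^ (k + d) * qExp (-(m * (p * r * (8 / 9)))))) := by
    have hcont : Continuous fun x : ℂ => τ ^ (k + d) *
        qExp (m * ((x • z) ⬝ᵥ (x • z) / (2 * τ) - p * r * (8 / 9))) := continuous_const.mul <|
      differentiable_qExp.continuous.comp (by unfold dotProduct; fun_prop)
    exact (hcont.tendsto' 0 _ (by simp)).mono_left nhdsWithin_le_nhds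
  refine tendsto_nhds_unique
    ((hv.tendsto_leadCoeff h (im_neg_inv_pos hτ) z).comp hscale)
    ((hfactor.mul ((hv.rotate h).tendsto_leadCoeff h hτ z)).congr fun x => ?_)
  rw [comp_apply, mul_smul, h.twist_neg_inv p r hτ, zpow_add₀ hτ0, zpow_natCast, mul_pow, inv_pow]
  field_simp

theorem isBigO_leadCoeff (hv : TwistVanishes m φ p r d) (h : IsE8JacobiForm k m φ) {g : ℂ → ℂ}
    (hO : (fun q : ℂ × (Fin 8 → ℂ) => twist m φ p r q.1 q.2) =O[I∞ ×ˢ 𝓝 0] fun q => g q.1) :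
    leadCoeff m φ d z p r =O[I∞] g := by
  obtain ⟨C, hC⟩ := hO.bound
  have hline : Tendsto (fun x : ℂ => x • z) (𝓝 0) (𝓝 0) :=
    Continuous.tendsto' (by fun_prop) 0 0 (zero_smul ..)
  obtain ⟨P, hP, Q, hQ, hPQ⟩ := eventually_prod_iff.1 hC
  obtain ⟨R, hR, hball⟩ := Metric.eventually_nhds_iff_ball.1 (hline.eventually hQ)
  refine IsBigO.of_bound (C / R ^ d) ?_
  filter_upwards [hP, tendsto_comap.eventually (eventually_gt_atTop 0)] with τ hPτ hτ
  exact (norm_limUnder_div_pow_le hR (h.differentiable_twist_smul p r hτ z)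
    (fun x hx => hPQ hPτ (hball x hx)) (hv τ hτ z)).trans_eq (mul_div_right_comm ..)

end TwistVanishes

namespace IsE8JacobiForm

theorem leadCoeff_add_three (h : IsE8JacobiForm k m φ) (hτ : 0 < τ.im) :
    leadCoeff m φ d z p (r + 3) τ = leadCoeff m φ d z p r τ := by
  simp only [leadCoeff, h.twist_add_three p r hτ]

theorem twistVanishes_zero (h : IsE8JacobiForm k m φ) (p r : ℤ) : TwistVanishes m φ p r 0 := by
  intro τ hτ z
  simpa only [pow_zero] using
    (h.differentiable_twist_smul p r hτ z).continuous.continuousAt.isBigO_one ℂ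

theorem eq_zero_of_twistVanishes (h : IsE8JacobiForm k m φ) (hv : ∀ d, TwistVanishes m φ 1 0 d)
    (hτ : 0 < τ.im) (z : Fin 8 → ℂ) : φ τ z = 0 := by
  have hzero := eq_zero_of_forall_isBigO_pow
    (h.differentiable_twist_smul 1 0 hτ (z - τ • centroid)) (fun d => hv d τ hτ _) 1
  simpa [twist, qExp_ne_zero] using hzero

theorem exists_leadCoeff_ne_zero (h : IsE8JacobiForm k m φ)
    (hne : ¬ ∀ τ : ℂ, 0 < τ.im → ∀ z, φ τ z = 0) :
    ∃ d, TwistVanishes m φ 1 0 d ∧ ∃ τ z, 0 < τ.im ∧ leadCoeff m φ d z 1 0 τ ≠ 0 := by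
  by_contra! hcon
  refine hne fun τ hτ z => h.eq_zero_of_twistVanishes (fun d => ?_) hτ z
  induction d with
  | zero => exact h.twistVanishes_zero 1 0
  | succ d ih =>
    exact fun τ hτ z => isBigO_pow_succ_of_limUnder_eq_zero
      (h.differentiable_twist_smul 1 0 hτ z) (ih τ hτ z) (hcon d ih τ z hτ)

end IsE8JacobiForm

end LeadCoeff

/-! ### The weight bound -/

section WeightBound

variable {k : ℤ} {m d : ℕ} {φ : ℂ → (Fin 8 → ℂ) → ℂ} {p r : ℤ} {τ : ℂ} {z : Fin 8 → ℂ}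

namespace TwistVanishes

theorem leadCoeff_add_one_pow (hv : TwistVanishes m φ p r d) (h : IsE8JacobiForm k m φ)
    (hτ : 0 < τ.im) :
    leadCoeff m φ d z p r (τ + 1) ^ 18 = leadCoeff m φ d z p (p + r) τ ^ 18 := by
  have hroot : qExp (m * (p ^ 2 * (4 / 9))) ^ 18 = 1 := by
    rw [← qExp_natCast_mul, ← qExp_intCast (8 * m * p ^ 2)]
    push_cast
    ring_nf
  rw [hv.leadCoeff_add_one h hτ, mul_pow, hroot, one_mul]

theorem leadCoeff_neg_inv_pow (hv : TwistVanishes m φ p r d) (h : IsE8JacobiForm k m φ)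
    (hτ : 0 < τ.im) :
    leadCoeff m φ d z p r (-τ⁻¹) ^ 18 =
      τ ^ (18 * (k + d)) * leadCoeff m φ d z r (-p) τ ^ 18 := by
  have hroot : qExp (-(m * (p * r * (8 / 9)))) ^ 18 = 1 := by
    rw [← qExp_natCast_mul, ← qExp_intCast (-(16 * m * p * r))]
    push_cast
    ring_nf
  rw [hv.leadCoeff_neg_inv h hτ, mul_pow, mul_pow, hroot, mul_one, ← zpow_natCast (τ ^ _),
    ← zpow_mul, mul_comm (k + d : ℤ)]
  rfl

theorem leadCoeff_neg_neg_pow (hv : TwistVanishes m φ p r d) (h : IsE8JacobiForm k m φ)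
    (hτ : 0 < τ.im) :
    leadCoeff m φ d z (-p) (-r) τ ^ 18 = leadCoeff m φ d z p r τ ^ 18 := by
  have hτ0 : τ ≠ 0 := fun h0 => by simp [h0] at hτ
  have heven : Even (18 * (k + d)) := (by decide : Even (18 : ℤ)).mul_right _
  have hpow := hv.leadCoeff_neg_inv_pow (z := z) h (im_neg_inv_pos hτ)
  rw [(hv.rotate h).leadCoeff_neg_inv_pow h hτ, ← mul_assoc, ← mul_zpow, inv_neg, inv_inv, neg_neg,
    neg_mul, inv_mul_cancel₀ hτ0, heven.neg_one_zpow, one_mul] at hpow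
  exact hpow.symm

theorem at_linePoint (hv : TwistVanishes m φ 1 0 d) (h : IsE8JacobiForm k m φ) (i : Fin 4) :
    TwistVanishes m φ (linePoint i).1 (linePoint i).2 d := by
  have h11 : TwistVanishes m φ 1 1 d := hv.add_left h
  fin_cases i <;> simp only [linePoint]
  · simpa using ((hv.rotate h).rotate h).rotate h
  · simpa using hv
  · simpa using h11
  · exact of_add_three (r := -1) (by simpa using h11.add_left h) h

end TwistVanishes

/-- The leading coefficient of the translate of `φ` attached to the line `i`; the 18th power removes
the ninth roots of unity by which `SL₂(ℤ)` acts, and the sign of the representative. -/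
def lineCoeff (m : ℕ) (φ : ℂ → (Fin 8 → ℂ) → ℂ) (d : ℕ) (z : Fin 8 → ℂ) (i : Fin 4) (τ : ℂ) : ℂ :=
  leadCoeff m φ d z (linePoint i).1 (linePoint i).2 τ ^ 18

theorem TwistVanishes.isPermutedFamily_lineCoeff (hv : TwistVanishes m φ 1 0 d)
    (h : IsE8JacobiForm k m φ) (z : Fin 8 → ℂ) :
    IsPermutedFamily (18 * (k + d)) lineT lineS (lineCoeff m φ d z) where
  differentiableOn i := ((hv.at_linePoint h i).differentiableOn_leadCoeff h).pow 18
  add_one i τ hτ := by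
    rw [lineCoeff, (hv.at_linePoint h i).leadCoeff_add_one_pow h hτ, lineCoeff]
    obtain ⟨hp, hr | hr⟩ := linePoint_lineT i
    · rw [hp, hr]
    · rw [hp, ← hr, h.leadCoeff_add_three hτ]
  neg_inv i τ hτ := by
    rw [lineCoeff, (hv.at_linePoint h i).leadCoeff_neg_inv_pow h hτ, lineCoeff]
    rcases linePoint_lineS i with hi | hi
    · rw [hi]
    · rw [hi, ← ((hv.at_linePoint h i).rotate h).leadCoeff_neg_neg_pow h hτ, neg_neg]

theorem TwistVanishes.lineCoeff_one_isBigO (hv : TwistVanishes m φ 1 0 d)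
    (h : IsE8JacobiForm k m φ) :
    lineCoeff m φ d z 1 =O[I∞] fun τ => qExp ((2 * (d - 4 * m) : ℤ) * τ) := by
  refine ((hv.isBigO_leadCoeff h (g := fun τ => qExp ((d - 4 * m) / 9 * τ))
    (hv.twist_one_zero_isBigO h)).pow 18).congr_right fun τ => ?_
  rw [← qExp_natCast_mul]
  push_cast
  ring_nf

theorem TwistVanishes.lineCoeff_zero_isBigO (hv : TwistVanishes m φ 1 0 d)
    (h : IsE8JacobiForm k m φ) : lineCoeff m φ d z 0 =O[I∞] fun _ => (1 : ℂ) :=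
  (((hv.at_linePoint h 0).isBigO_leadCoeff h (g := fun _ => 1)
    h.twist_zero_one_isBigO).pow 18).congr_right fun _ => one_pow 18

theorem jacobi_weight_lower_bound_general (h : IsE8JacobiForm k m φ)
    (hne : ¬ ∀ τ : ℂ, 0 < τ.im → ∀ z, φ τ z = 0) : -(4 * (m : ℤ)) ≤ k := by
  by_contra! hk
  obtain ⟨d, hv, τ, z, hτ, hcoeff⟩ := h.exists_leadCoeff_ne_zero hne
  have hzero : lineCoeff m φ d z 1 τ = 0 :=
    (hv.isPermutedFamily_lineCoeff h z).eq_zero_of_isBigO_qExp (n := 2 * (d - 4 * m)) (by linarith)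
      (hv.lineCoeff_zero_isBigO h) (hv.lineCoeff_one_isBigO h) 1 hτ
  exact hcoeff (pow_eq_zero_iff (by norm_num) |>.1 hzero)

end WeightBound

/-- If φ is a non-zero W(E8)-invariant weak Jacobi form of weight k and
index m then k ≥ −4m. -/
theorem jacobi_weight_lower_bound (k : ℤ) (m : ℕ) (φ : ℂ → (Fin 8 → ℂ) → ℂ)
    (h : IsWeakJacobiFormE8 k m φ)
    (hne : ¬ ∀ τ : ℂ, 0 < τ.im → ∀ z, φ τ z = 0) :
    -(4 * (m : ℤ)) ≤ k :=
  jacobi_weight_lower_bound_general h.isE8JacobiForm hne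

end E8Jacobi
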